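/- Let k ≥ 1 and let F be an automorphism of ℂ^k with an attracting fixed point at 0. Then there exists ε > 0 such that for every sequence f_1, f_2, … of automorphisms of ℂ^k satisfying ‖F(z) − f_n(z)‖ < ε for every n ∈ ℕ and every z in the open unit ball B, there exists an open neighborhood N of 0 such that the closure of f_n(N) is a compact subset of N for every n, and the basin of attraction ⋃_{n≥1} f(n)^{-1}(N) is biholomorphic to ℂ^k. -/

import Mathlib

open Metric Filter Topology

noncomputable section

/-- `ℂ^k` with the Euclidean norm. -/
abbrev Ck (k : ℕ) := EuclideanSpace ℂ (Fin k)

/-- `seqComp f n = f_{n-1} ∘ ⋯ ∘ f_0` (so `seqComp f n` is the composition of the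
first `n` maps of the sequence). -/
def seqComp {α : Type*} (f : ℕ → α → α) : ℕ → α → α
  | 0 => id
  | n + 1 => f n ∘ seqComp f n

/-- An automorphism of `ℂ^k`: a bijective holomorphic map with holomorphic inverse. -/
def IsAutomorphism {k : ℕ} (F : Ck k → Ck k) : Prop :=
  Differentiable ℂ F ∧ ∃ Finv : Ck k → Ck k, Differentiable ℂ Finv ∧
    Function.LeftInverse Finv F ∧ Function.RightInverse Finv F

/-- A set `Ω ⊆ ℂ^k` is biholomorphic to `ℂ^k`: there is a bijective holomorphic map
`Ψ : Ω → ℂ^k` with holomorphic inverse `Φ`. -/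
def BiholoToC {k : ℕ} (Ω : Set (Ck k)) : Prop :=
  ∃ (Ψ Φ : Ck k → Ck k),
    DifferentiableOn ℂ Ψ Ω ∧ Differentiable ℂ Φ ∧
    (∀ w, Φ w ∈ Ω) ∧ (∀ z ∈ Ω, Φ (Ψ z) = z) ∧ (∀ w, Ψ (Φ w) = w)

/-!
Choose a basis in which `F'(0)` is almost the diagonal map `lam`, and zoom in at `0`, so that every
`f_n` is close to `z ↦ lam * z` on a polydisc of radius `r > 1`. Call the monomial `z ^ α e_j`
subresonant if `|lam j| ≤ |lam ^ α|`; since `|lam| < 1`, there are only finitely many of these. We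
look for coordinate changes `h_n = id + u_n` without subresonant terms in `u_n` and for maps
`t_n = lam⁻¹ + v_n` with only subresonant terms in `v_n` such that `h_n = t_n ∘ h_{n+1} ∘ f_n`. The
linearization `u_n = lam⁻¹ * u_{n+1} ∘ lam + v_n ∘ lam + g_n` of this equation at `f_n = lam` is
solved one coefficient at a time: the non-subresonant coefficients of `u_{n+1}` get multiplied by
`lam ^ α / lam j`, which is at most some `θ < 1` in absolute value, and the subresonant coefficients
of `v_n` only ask for division by `lam ^ α`. Hence the full equation is solved by a contraction on
bounded sequences of small summable coefficient families `b_n`, each encoding both `u_n` and `v_n`.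

For `μ = r • lam`, conjugation by the diagonal map `μ ^ n` does not enlarge subresonant
coefficients. So `t_n` is, in each of the coordinates `μ ^ n`, a small perturbation of `lam⁻¹` on a
fixed polydisc; these polydiscs exhaust `ℂ^k`, whence `t_n` is an automorphism, and the inverses
`τ_n = t_n⁻¹` bring every point close to `0`. The maps `τ(n)⁻¹ ∘ h_n ∘ f(n)` agree with each other
where they are defined, and together they map the basin biholomorphically onto `ℂ^k`.
-/

/-! ### Almost diagonal bases -/

section AlmostDiagonal

open Module

variable {K V : Type*} [Field K] [AddCommGroup V] [Module K V]

theorem exists_dual_ne_zero_comp_eq_smul [IsAlgClosed K] [FiniteDimensional K V] [Nontrivial V]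
    (A : End K V) : ∃ (φ : Dual K V) (μ : K), φ ≠ 0 ∧ φ ∘ₗ A = μ • φ := by
  obtain ⟨μ, hμ⟩ := End.exists_eigenvalue (LinearMap.dualMap A)
  obtain ⟨φ, hφ⟩ := hμ.exists_hasEigenvector
  exact ⟨φ, μ, hφ.2, hφ.apply_eq_smul⟩

theorem exists_basis_fin_succ_extending_ker {n : ℕ} {φ : Dual K V} (hφ : φ ≠ 0)
    (b : Basis (Fin n) K (LinearMap.ker φ)) :
    ∃ B : Basis (Fin (n + 1)) K V, ∀ j, B (Fin.castSucc j) = b j := by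
  obtain ⟨y, hy⟩ := DFunLike.ne_iff.mp hφ
  have hli : ∀ c : K, ∀ x ∈ LinearMap.ker φ, c • y + x = 0 → c = 0 := by
    intro c x hx h0
    have := congrArg φ h0
    rw [map_add, LinearMap.mem_ker.mp hx] at this
    simpa [show φ y ≠ 0 from hy] using this
  have hsp : ∀ z : V, ∃ c : K, z + c • y ∈ LinearMap.ker φ := fun z =>
    ⟨-(φ z / φ y), by simp [LinearMap.mem_ker, show φ y ≠ 0 from hy]⟩
  exact ⟨Basis.mkFinSnoc b y hli hsp, fun j => by simp⟩

theorem repr_eq_mapDomain_castSucc_of_extends {n : ℕ} {N : Submodule K V}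
    {b : Basis (Fin n) K N} {B : Basis (Fin (n + 1)) K V}
    (hB : ∀ j, B (Fin.castSucc j) = b j) (x : N) :
    B.repr x = Finsupp.mapDomain Fin.castSucc (b.repr x) := by
  have h : B.repr.toLinearMap ∘ₗ N.subtype =
      Finsupp.lmapDomain K K Fin.castSucc ∘ₗ b.repr.toLinearMap :=
    b.ext fun j => by simp [← hB]
  exact LinearMap.congr_fun h x

theorem exists_basis_toMatrix_isUpperTriangular [IsAlgClosed K] [FiniteDimensional K V] {n : ℕ}
    (hn : finrank K V = n) (A : End K V) :
    ∃ b : Basis (Fin n) K V, (LinearMap.toMatrix b b A).IsUpperTriangular := by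
  induction n generalizing V with
  | zero => exact ⟨finBasisOfFinrankEq K V hn, fun i => i.elim0⟩
  | succ n ih =>
    have : Nontrivial V := nontrivial_of_finrank_pos (R := K) (by omega)
    obtain ⟨φ, μ, hφ0, hφ⟩ := exists_dual_ne_zero_comp_eq_smul A
    have hker : ∀ x ∈ LinearMap.ker φ, A x ∈ LinearMap.ker φ := fun x hx => by
      rw [LinearMap.mem_ker, ← LinearMap.comp_apply, hφ, LinearMap.smul_apply, hx, smul_zero]
    have hfr := Dual.finrank_ker_add_one_of_ne_zero hφ0
    obtain ⟨b, hb⟩ := ih (by omega) (A.restrict hker)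
    obtain ⟨B, hB⟩ := exists_basis_fin_succ_extending_ker hφ0 b
    refine ⟨B, fun i j hji => ?_⟩
    obtain ⟨j, rfl⟩ := Fin.exists_castSucc_eq.mpr (Fin.ne_last_of_lt hji)
    have hAB : B.repr (A (B j.castSucc)) =
        Finsupp.mapDomain Fin.castSucc (b.repr (A.restrict hker (b j))) := by
      rw [hB]
      exact repr_eq_mapDomain_castSucc_of_extends hB (A.restrict hker (b j))
    rw [LinearMap.toMatrix_apply, hAB]
    induction i using Fin.lastCases with
    | last => exact Finsupp.mapDomain_of_notMem_range _ _ (by simp)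
    | cast i =>
      rw [Finsupp.mapDomain_apply (Fin.castSucc_injective n), ← LinearMap.toMatrix_apply]
      exact hb hji

theorem hasEigenvalue_toMatrix_diag [FiniteDimensional K V] {n : ℕ} {A : End K V}
    {b : Basis (Fin n) K V} (hb : (LinearMap.toMatrix b b A).IsUpperTriangular) (j : Fin n) :
    A.HasEigenvalue (LinearMap.toMatrix b b A j j) := by
  rw [End.hasEigenvalue_iff_isRoot_charpoly, ← LinearMap.charpoly_toMatrix A b,
    Matrix.charpoly_of_isUpperTriangular _ hb, Polynomial.IsRoot, Polynomial.eval_prod]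
  exact Finset.prod_eq_zero (Finset.mem_univ j) (by simp)

theorem toMatrix_unitsSMul {ι : Type*} [Fintype ι] [DecidableEq ι] (b : Basis ι K V)
    (w : ι → Kˣ) (A : End K V) (i j : ι) :
    LinearMap.toMatrix (b.unitsSMul w) (b.unitsSMul w) A i j =
      (w i : K)⁻¹ * w j * LinearMap.toMatrix b b A i j := by
  simp [LinearMap.toMatrix_apply, Basis.unitsSMul_apply, Units.smul_def, mul_assoc,
    mul_left_comm]

/-- Conjugating with `diag (t^j)` multiplies the `(i, j)` entry by `t^(j-i)`. -/
theorem exists_basis_norm_toMatrix_sub_diagonal_le {𝕜 : Type*} [NontriviallyNormedField 𝕜]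
    [Module 𝕜 V] {n : ℕ} {A : End 𝕜 V} {b : Basis (Fin n) 𝕜 V}
    (hb : (LinearMap.toMatrix b b A).IsUpperTriangular) {η : ℝ} (hη : 0 < η) :
    ∃ b' : Basis (Fin n) 𝕜 V, ∀ i j, ‖(LinearMap.toMatrix b' b' A -
      Matrix.diagonal (LinearMap.toMatrix b b A).diag) i j‖ ≤ η := by
  have hlim : ∀ᶠ t in 𝓝[≠] (0 : 𝕜), ∀ i j : Fin n, i < j →
      ‖t ^ (j - i : ℕ) * LinearMap.toMatrix b b A i j‖ < η := by
    refine eventually_nhdsWithin_of_eventually_nhds ?_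
    simp only [eventually_all]
    intro i j hij
    have hcont : Continuous fun t : 𝕜 => ‖t ^ (j - i : ℕ) * LinearMap.toMatrix b b A i j‖ := by
      fun_prop
    exact hcont.continuousAt.eventually_lt_const
      (by simpa [Nat.sub_ne_zero_of_lt (Fin.lt_def.mp hij)] using hη)
  obtain ⟨t, ht, ht0 : t ≠ 0⟩ := (hlim.and self_mem_nhdsWithin).exists
  refine ⟨b.unitsSMul fun j => Units.mk0 t ht0 ^ (j : ℕ), fun i j => ?_⟩
  rw [Matrix.sub_apply, toMatrix_unitsSMul]
  simp only [Units.val_pow_eq_pow_val, Units.val_mk0]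
  rcases lt_trichotomy i j with hij | rfl | hij
  · rw [Matrix.diagonal_apply_ne _ hij.ne, sub_zero, mul_comm (t ^ (i : ℕ))⁻¹,
      ← pow_sub₀ t ht0 (Fin.lt_def.mp hij).le]
    exact (ht i j hij).le
  · simpa [inv_mul_cancel₀ (pow_ne_zero (i : ℕ) ht0)] using hη.le
  · simpa [Matrix.diagonal_apply_ne _ hij.ne',
      show LinearMap.toMatrix b b A i j = 0 from hb hij] using hη.le

theorem norm_equivFun_sub_mul_le {𝕜 ι : Type*} [NormedField 𝕜] [Module 𝕜 V] [Fintype ι]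
    [DecidableEq ι] {A : End 𝕜 V} (b : Basis ι 𝕜 V) {lam : ι → 𝕜} {η : ℝ} (hη : 0 ≤ η)
    (hb : ∀ i j, ‖(LinearMap.toMatrix b b A - Matrix.diagonal lam) i j‖ ≤ η) (v : V) :
    ‖b.equivFun (A v) - lam * b.equivFun v‖ ≤ Fintype.card ι * η * ‖b.equivFun v‖ := by
  have hmul : b.equivFun (A v) - lam * b.equivFun v =
      (LinearMap.toMatrix b b A - Matrix.diagonal lam).mulVec (b.equivFun v) := by
    rw [Matrix.sub_mulVec]
    exact congrArg₂ (· - ·) (LinearMap.toMatrix_mulVec_repr b b A v).symm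
      (funext fun i => (Matrix.mulVec_diagonal lam _ i).symm)
  rw [hmul, pi_norm_le_iff_of_nonneg (by positivity)]
  intro i
  calc ‖∑ j, (LinearMap.toMatrix b b A - Matrix.diagonal lam) i j * b.equivFun v j‖
      ≤ ∑ _j : ι, η * ‖b.equivFun v‖ := norm_sum_le_of_le _ fun j _ => by
        rw [norm_mul]
        gcongr
        exacts [hb i j, norm_le_pi_norm _ j]
    _ = Fintype.card ι * η * ‖b.equivFun v‖ := by simp [mul_assoc]

theorem exists_eigenvalues_forall_exists_almost_diagonal_basis [Module ℂ V]
    [FiniteDimensional ℂ V] (A : End ℂ V) :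
    ∃ lam : Fin (finrank ℂ V) → ℂ, (∀ j, A.HasEigenvalue (lam j)) ∧ ∀ η > 0,
      ∃ b : Basis (Fin (finrank ℂ V)) ℂ V,
        ∀ v, ‖b.equivFun (A v) - lam * b.equivFun v‖ ≤ η * ‖b.equivFun v‖ := by
  obtain ⟨b, hb⟩ := exists_basis_toMatrix_isUpperTriangular rfl A
  refine ⟨(LinearMap.toMatrix b b A).diag, hasEigenvalue_toMatrix_diag hb, fun η hη => ?_⟩
  obtain ⟨b', hb'⟩ := exists_basis_norm_toMatrix_sub_diagonal_le hb
    (show 0 < η / (finrank ℂ V + 1) by positivity)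
  refine ⟨b', fun v => (norm_equivFun_sub_mul_le b' (by positivity) hb' v).trans ?_⟩
  gcongr
  rw [Fintype.card_fin, mul_div_left_comm]
  exact mul_le_of_le_one_right hη.le (div_le_one_of_le₀ (by linarith) (by positivity))

end AlmostDiagonal

/-! ### Power series on polydiscs -/

section MultiPow

variable {ι M : Type*} [Fintype ι] [CommMonoid M]

/-- The monomial `z ^ α = ∏ i, z i ^ α i` with multi-index `α`, evaluated at `z`. -/
def multiPow (α : ι → ℕ) (z : ι → M) : M := ∏ i, z i ^ α i

theorem multiPow_mul (α : ι → ℕ) (x y : ι → M) :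
    multiPow α (x * y) = multiPow α x * multiPow α y := by
  simp [multiPow, mul_pow, Finset.prod_mul_distrib]

theorem multiPow_const (α : ι → ℕ) (c : M) : multiPow α (fun _ => c) = c ^ ∑ i, α i := by
  simp [multiPow, Finset.prod_pow_eq_pow_sum]

theorem multiPow_zero_left (z : ι → M) : multiPow 0 z = 1 := by
  simp [multiPow]

theorem multiPow_ne_zero {𝕜 : Type*} [Field 𝕜] {z : ι → 𝕜} (hz : ∀ i, z i ≠ 0) (α : ι → ℕ) :
    multiPow α z ≠ 0 :=
  Finset.prod_ne_zero_iff.mpr fun i _ => pow_ne_zero _ (hz i)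

theorem norm_multiPow {𝕜 : Type*} [NormedField 𝕜] (α : ι → ℕ) (z : ι → 𝕜) :
    ‖multiPow α z‖ = multiPow α fun i => ‖z i‖ := by
  simp [multiPow, norm_prod]

theorem multiPow_le_multiPow {x y : ι → ℝ} (hx : 0 ≤ x) (hxy : x ≤ y) (α : ι → ℕ) :
    multiPow α x ≤ multiPow α y :=
  Finset.prod_le_prod (fun i _ => pow_nonneg (hx i) _)
    fun i _ => pow_le_pow_left₀ (hx i) (hxy i) _

theorem norm_multiPow_le {𝕜 : Type*} [NormedField 𝕜] (α : ι → ℕ) (z : ι → 𝕜) :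
    ‖multiPow α z‖ ≤ ‖z‖ ^ ∑ i, α i := by
  rw [norm_multiPow, ← multiPow_const]
  exact multiPow_le_multiPow (fun i => norm_nonneg _) (norm_le_pi_norm z) α

theorem multiPow_cons {n : ℕ} (m : ℕ) (α : Fin n → ℕ) (z : Fin (n + 1) → M) :
    multiPow (Fin.cons m α) z = z 0 ^ m * multiPow α (Fin.tail z) := by
  simp [multiPow, Fin.prod_univ_succ, Fin.tail]

theorem summable_norm_multiPow {𝕜 : Type*} [NormedField 𝕜] {n : ℕ} {x : Fin n → 𝕜}
    (hx : ∀ i, ‖x i‖ < 1) : Summable fun α => ‖multiPow α x‖ := by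
  induction n with
  | zero => exact (hasSum_fintype _).summable
  | succ n ih =>
    rw [← (Fin.consEquiv fun _ : Fin (n + 1) => ℕ).summable_iff]
    refine ((summable_norm_geometric_of_norm_lt_one (hx 0)).mul_of_nonneg
      (ih (x := Fin.tail x) fun i => hx i.succ) (fun _ => norm_nonneg _)
      fun _ => norm_nonneg _).congr fun p => ?_
    simp [Fin.consEquiv, multiPow_cons]

theorem hasSum_multiPow {𝕜 : Type*} [NormedField 𝕜] [CompleteSpace 𝕜] {n : ℕ} {x : Fin n → 𝕜}
    (hx : ∀ i, ‖x i‖ < 1) : HasSum (fun α => multiPow α x) (∏ i, (1 - x i)⁻¹) := by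
  induction n with
  | zero => simp [multiPow]
  | succ n ih =>
    have htail : ∀ i, ‖Fin.tail x i‖ < 1 := fun i => hx i.succ
    rw [← (Fin.consEquiv fun _ : Fin (n + 1) => ℕ).hasSum_iff, Fin.prod_univ_succ]
    have hprod : Summable fun p : ℕ × (Fin n → ℕ) => x 0 ^ p.1 * multiPow p.2 (Fin.tail x) :=
      summable_mul_of_summable_norm (f := fun m => x 0 ^ m) (g := fun α => multiPow α (Fin.tail x))
        (summable_norm_geometric_of_norm_lt_one (hx 0)) (summable_norm_multiPow htail)
    refine ((hasSum_geometric_of_norm_lt_one (hx 0)).mul (ih htail) hprod).congr_fun fun p => ?_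
    exact multiPow_cons p.1 p.2 x

end MultiPow

section Cauchy

variable {n : ℕ} {r M : ℝ} {g g' : (Fin n → ℂ) → ℂ} {z : Fin n → ℂ}

theorem norm_torusMap_zero_apply (hr : 0 ≤ r) (θ : Fin n → ℝ) (i : Fin n) :
    ‖torusMap (0 : Fin n → ℂ) (fun _ => r) θ i‖ = r := by
  simp [torusMap, abs_of_nonneg hr]

theorem torusMap_zero_mem_closedBall (hr : 0 ≤ r) (θ : Fin n → ℝ) :
    torusMap (0 : Fin n → ℂ) (fun _ => r) θ ∈ closedBall 0 r := by
  rw [mem_closedBall_zero_iff, pi_norm_le_iff_of_nonneg hr]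
  exact fun i => (norm_torusMap_zero_apply hr θ i).le

theorem torusMap_zero_apply_ne (hr : 0 ≤ r) {w : ℂ} (hw : ‖w‖ < r) (θ : Fin n → ℝ)
    (i : Fin n) : torusMap (0 : Fin n → ℂ) (fun _ => r) θ i ≠ w := by
  rintro rfl
  exact hw.ne (norm_torusMap_zero_apply hr θ i)

theorem continuous_torusMap_zero (r : ℝ) :
    Continuous (torusMap (0 : Fin n → ℂ) fun _ => r) := by
  unfold torusMap
  fun_prop

theorem continuous_comp_torusMap_zero (hr : 0 ≤ r) (hg : ContinuousOn g (closedBall 0 r)) :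
    Continuous fun θ => g (torusMap (0 : Fin n → ℂ) (fun _ => r) θ) :=
  hg.comp_continuous (continuous_torusMap_zero r) (torusMap_zero_mem_closedBall hr)

theorem torusIntegrable_of_continuous
    (hg : Continuous fun θ => g (torusMap (0 : Fin n → ℂ) (fun _ => r) θ)) :
    TorusIntegrable g 0 fun _ => r :=
  hg.continuousOn.integrableOn_compact isCompact_Icc

theorem torusIntegrable_prod_sub_inv_mul (hr : 0 < r) (hg : ContinuousOn g (closedBall 0 r))
    (hz : ∀ i, ‖z i‖ < r) :
    TorusIntegrable (fun ζ => (∏ i, (ζ i - z i)⁻¹) * g ζ) 0 fun _ => r := by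
  refine torusIntegrable_of_continuous (.mul ?_ (continuous_comp_torusMap_zero hr.le hg))
  have hcont := continuous_torusMap_zero (n := n) r
  exact continuous_finsetProd _ fun i _ => .inv₀ (by fun_prop)
    fun θ => sub_ne_zero.mpr (torusMap_zero_apply_ne hr.le (hz i) θ i)

theorem cons_mem_closedBall_zero {x : ℂ} {y : Fin n → ℂ} (hx : ‖x‖ ≤ r) (hy : ‖y‖ ≤ r) :
    (Fin.cons x y : Fin (n + 1) → ℂ) ∈ closedBall 0 r := by
  have hr : 0 ≤ r := (norm_nonneg x).trans hx
  rw [mem_closedBall_zero_iff, pi_norm_le_iff_of_nonneg hr, Fin.forall_fin_succ]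
  exact ⟨hx, fun i => (norm_le_pi_norm y i).trans hy⟩

theorem differentiable_fin_cons : Differentiable ℂ
    fun p : ℂ × (Fin n → ℂ) => (Fin.cons p.1 p.2 : Fin (n + 1) → ℂ) := by
  rw [differentiable_pi, Fin.forall_fin_succ]
  simp only [Fin.cons_zero, Fin.cons_succ]
  exact ⟨by fun_prop, fun i => by fun_prop⟩

theorem torusIntegral_prod_sub_inv_mul (hr : 0 < r)
    (hg : DifferentiableOn ℂ g (closedBall 0 r)) (hz : ∀ i, ‖z i‖ < r) :
    (∯ ζ in T((0 : Fin n → ℂ), fun _ => r), (∏ i, (ζ i - z i)⁻¹) * g ζ) =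
      (2 * Real.pi * Complex.I) ^ n * g z := by
  induction n with
  | zero => simp [torusIntegral_dim0, Subsingleton.elim (0 : Fin 0 → ℂ) z]
  | succ n ih =>
    have htail : ‖Fin.tail z‖ < r := (pi_norm_lt_iff hr).mpr fun i => hz i.succ
    have hslice : ∀ x ∈ sphere (0 : ℂ) r, (∯ y in T((0 : Fin n → ℂ), fun _ => r),
        (∏ i, ((Fin.cons x y : Fin (n + 1) → ℂ) i - z i)⁻¹) * g (Fin.cons x y)) =
          (x - z 0)⁻¹ • ((2 * Real.pi * Complex.I) ^ n * g (Fin.cons x (Fin.tail z))) := by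
      intro x hx
      have hdiff : DifferentiableOn ℂ (fun y : Fin n → ℂ => g (Fin.cons x y))
          (closedBall 0 r) :=
        hg.comp (differentiable_fin_cons.comp (by fun_prop : Differentiable ℂ
          fun y : Fin n → ℂ => (x, y))).differentiableOn fun y hy => cons_mem_closedBall_zero
            (mem_sphere_zero_iff_norm.mp hx).le (mem_closedBall_zero_iff.mp hy)
      rw [← ih hdiff (z := Fin.tail z) fun i => hz i.succ, smul_eq_mul,
        ← torusIntegral_const_mul]
      simp only [Fin.prod_univ_succ, Fin.cons_zero, Fin.cons_succ, Fin.tail, mul_assoc]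
    have hdiff : DifferentiableOn ℂ (fun x : ℂ => (2 * Real.pi * Complex.I) ^ n *
        g (Fin.cons x (Fin.tail z))) (closedBall 0 r) :=
      (hg.comp (differentiable_fin_cons.comp (by fun_prop : Differentiable ℂ
        fun x : ℂ => (x, Fin.tail z))).differentiableOn fun x hx => cons_mem_closedBall_zero
          (mem_closedBall_zero_iff.mp hx) htail.le).const_mul _
    rw [torusIntegral_succ (torusIntegrable_prod_sub_inv_mul hr hg.continuousOn hz)]
    refine (circleIntegral.integral_congr hr.le hslice).trans ?_
    rw [hdiff.circleIntegral_sub_inv_smul (by simpa using hz 0), Fin.cons_self_tail, smul_eq_mul]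
    ring

/-- The Taylor coefficient of `g` at `0` of multi-index `α`, as a Cauchy integral over the torus
of radius `r`. -/
def cauchyCoeff (r : ℝ) (g : (Fin n → ℂ) → ℂ) (α : Fin n → ℕ) : ℂ :=
  ((2 * Real.pi * Complex.I) ^ n)⁻¹ *
    ∯ ζ in T((0 : Fin n → ℂ), fun _ => r), (∏ i, (ζ i)⁻¹ ^ (α i + 1)) * g ζ

theorem continuous_cauchyKernel (hr : 0 < r) (hg : ContinuousOn g (closedBall 0 r))
    (α : Fin n → ℕ) : Continuous fun θ =>
      (∏ i, (torusMap (0 : Fin n → ℂ) (fun _ => r) θ i)⁻¹ ^ (α i + 1)) *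
        g (torusMap (0 : Fin n → ℂ) (fun _ => r) θ) := by
  refine .mul ?_ (continuous_comp_torusMap_zero hr.le hg)
  have hcont := continuous_torusMap_zero (n := n) r
  exact continuous_finsetProd _ fun i _ => .pow
    (.inv₀ (by fun_prop) fun θ => torusMap_zero_apply_ne hr.le (by simpa using hr) θ i) _

theorem cauchyCoeff_sub (hr : 0 < r) (hg : ContinuousOn g (closedBall 0 r))
    (hg' : ContinuousOn g' (closedBall 0 r)) (α : Fin n → ℕ) :
    cauchyCoeff r (g - g') α = cauchyCoeff r g α - cauchyCoeff r g' α := by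
  simp only [cauchyCoeff, ← mul_sub]
  rw [← torusIntegral_sub (torusIntegrable_of_continuous (continuous_cauchyKernel hr hg α))
    (torusIntegrable_of_continuous (continuous_cauchyKernel hr hg' α))]
  simp only [Pi.sub_apply, mul_sub]

theorem norm_prod_torusMap_inv_pow (hr : 0 < r) (α : Fin n → ℕ) (θ : Fin n → ℝ) :
    ‖∏ i, (torusMap (0 : Fin n → ℂ) (fun _ => r) θ i)⁻¹ ^ (α i + 1)‖ =
      (r ^ n)⁻¹ * r⁻¹ ^ ∑ i, α i := by
  simp only [norm_prod, norm_pow, norm_inv, norm_torusMap_zero_apply hr.le]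
  simp [pow_succ, Finset.prod_mul_distrib, Finset.prod_pow_eq_pow_sum, mul_comm]

theorem norm_cauchyCoeff_le (hr : 0 < r) (hM : ∀ z ∈ closedBall (0 : Fin n → ℂ) r, ‖g z‖ ≤ M)
    (α : Fin n → ℕ) : ‖cauchyCoeff r g α‖ ≤ M * r⁻¹ ^ ∑ i, α i := by
  have hkernel : ∀ θ, ‖(∏ i, (torusMap (0 : Fin n → ℂ) (fun _ => r) θ i)⁻¹ ^ (α i + 1)) *
      g (torusMap 0 (fun _ => r) θ)‖ ≤ (r ^ n)⁻¹ * r⁻¹ ^ (∑ i, α i) * M := fun θ => by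
    rw [norm_mul, norm_prod_torusMap_inv_pow hr]
    gcongr
    exact hM _ (torusMap_zero_mem_closedBall hr.le θ)
  have hint := norm_torusIntegral_le_of_norm_le_const
    (f := fun ζ => (∏ i, (ζ i)⁻¹ ^ (α i + 1)) * g ζ) hkernel
  rw [cauchyCoeff, norm_mul, norm_inv, inv_mul_le_iff₀ (by simp [Real.pi_pos.ne'])]
  refine hint.trans_eq ?_
  simp only [Finset.prod_const, Finset.card_univ, Fintype.card_fin, abs_of_pos hr, norm_pow,
    norm_mul, Complex.norm_I, Complex.norm_real, Real.norm_of_nonneg Real.pi_pos.le,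
    Complex.norm_two, mul_one]
  field_simp

theorem hasSum_cauchyKernel (hz : ∀ i, ‖z i‖ < r) {ζ : Fin n → ℂ} (hζ : ∀ i, ‖ζ i‖ = r) (w : ℂ) :
    HasSum (fun α => multiPow α z * ((∏ i, (ζ i)⁻¹ ^ (α i + 1)) * w))
      ((∏ i, (ζ i - z i)⁻¹) * w) := by
  have hr (i : Fin n) : 0 < r := (norm_nonneg _).trans_lt (hz i)
  have hζ0 : ∀ i, ζ i ≠ 0 := fun i => norm_pos_iff.mp (hζ i ▸ hr i)
  have hgeom := (hasSum_multiPow (x := z / ζ) fun i => by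
    simpa [hζ, div_lt_one (hr i)] using hz i).mul_left (∏ i, (ζ i)⁻¹)
  have hprod : (∏ i, (ζ i)⁻¹) * ∏ i, (1 - (z / ζ) i)⁻¹ = ∏ i, (ζ i - z i)⁻¹ := by
    rw [← Finset.prod_mul_distrib]
    refine Finset.prod_congr rfl fun i _ => ?_
    rw [← mul_inv, mul_sub, mul_one, Pi.div_apply, mul_div_cancel₀ _ (hζ0 i)]
  rw [hprod] at hgeom
  refine (hgeom.mul_right w).congr_fun fun α => ?_
  simp only [multiPow, pow_succ, Finset.prod_mul_distrib, Pi.div_apply, div_eq_mul_inv, mul_pow]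
  ring

theorem norm_torusIntegrand_cauchyKernel (hr : 0 < r) (α : Fin n → ℕ) (θ : Fin n → ℝ) (w : ℂ) :
    ‖(∏ i, (r : ℂ) * Complex.exp (θ i * Complex.I) * Complex.I) • (multiPow α z *
      ((∏ i, (torusMap (0 : Fin n → ℂ) (fun _ => r) θ i)⁻¹ ^ (α i + 1)) * w))‖ =
        ‖w‖ * multiPow α fun i => ‖z i‖ / r := by
  have hjac : ‖∏ i : Fin n, (r : ℂ) * Complex.exp (θ i * Complex.I) * Complex.I‖ = r ^ n := by
    simp [norm_prod, abs_of_pos hr]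
  have hdiv : (multiPow α fun i => ‖z i‖ / r) = ‖multiPow α z‖ * r⁻¹ ^ ∑ i, α i := by
    rw [norm_multiPow, ← multiPow_const, ← multiPow_mul]
    rfl
  rw [norm_smul, norm_mul, norm_mul, norm_prod_torusMap_inv_pow hr, hjac, hdiv]
  field_simp

theorem hasSum_torusIntegral_cauchyKernel (hr : 0 < r) (hg : ContinuousOn g (closedBall 0 r))
    (hz : ∀ i, ‖z i‖ < r) :
    HasSum (fun α => ∯ ζ in T((0 : Fin n → ℂ), fun _ => r),
        multiPow α z * ((∏ i, (ζ i)⁻¹ ^ (α i + 1)) * g ζ))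
      (∯ ζ in T((0 : Fin n → ℂ), fun _ => r), (∏ i, (ζ i - z i)⁻¹) * g ζ) := by
  obtain ⟨M, hM⟩ := (isCompact_closedBall (0 : Fin n → ℂ) r).exists_bound_of_continuousOn hg
  have hgeom : Summable fun α => multiPow α fun i => ‖z i‖ / r :=
    .of_norm (summable_norm_multiPow (x := fun i => ‖z i‖ / r) fun i => by
      simpa [abs_of_pos hr, div_lt_one hr] using hz i)
  unfold torusIntegral
  apply MeasureTheory.hasSum_integral_of_dominated_convergence
    fun α _ => M * multiPow α fun i => ‖z i‖ / r
  · intro α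
    have hjac : Continuous fun θ : Fin n → ℝ =>
        ∏ i, (r : ℂ) * Complex.exp (θ i * Complex.I) * Complex.I := by fun_prop
    exact (hjac.smul (continuous_const.mul
      (continuous_cauchyKernel hr hg α))).aestronglyMeasurable
  · intro α
    refine Eventually.of_forall fun θ => ?_
    rw [norm_torusIntegrand_cauchyKernel hr]
    have hnonneg : 0 ≤ multiPow α fun i => ‖z i‖ / r := Finset.prod_nonneg fun i _ => by positivity
    exact mul_le_mul_of_nonneg_right (hM _ (torusMap_zero_mem_closedBall hr.le θ)) hnonneg
  · exact Eventually.of_forall fun _ => hgeom.mul_left M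
  · rw [← MeasureTheory.IntegrableOn]
    exact continuous_const.continuousOn.integrableOn_compact isCompact_Icc
  · refine Eventually.of_forall fun θ => HasSum.const_smul _ ?_
    exact hasSum_cauchyKernel hz (norm_torusMap_zero_apply hr.le θ) _

theorem hasSum_cauchyCoeff (hr : 0 < r) (hg : DifferentiableOn ℂ g (closedBall 0 r))
    (hz : ‖z‖ < r) : HasSum (fun α => cauchyCoeff r g α * multiPow α z) (g z) := by
  have hzi := (pi_norm_lt_iff hr).mp hz
  have hsum := (hasSum_torusIntegral_cauchyKernel hr hg.continuousOn hzi).mul_left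
    ((2 * Real.pi * Complex.I : ℂ) ^ n)⁻¹
  rw [torusIntegral_prod_sub_inv_mul hr hg hzi,
    inv_mul_cancel_left₀ (pow_ne_zero _ Complex.two_pi_I_ne_zero)] at hsum
  refine hsum.congr_fun fun α => ?_
  rw [torusIntegral_const_mul, cauchyCoeff]
  ring

end Cauchy

section CoeffSpace

theorem hasSum_norm_lp_one {α : Type*} (b : lp (fun _ : α => ℂ) 1) :
    HasSum (fun p => ‖b p‖) ‖b‖ := by
  simpa using lp.hasSum_norm (p := 1) (by simp) b

theorem norm_lp_one_le {α : Type*} {b : lp (fun _ : α => ℂ) 1} {g : α → ℝ} {S : ℝ}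
    (hg : HasSum g S) (hbg : ∀ p, ‖b p‖ ≤ g p) : ‖b‖ ≤ S :=
  hasSum_le hbg (hasSum_norm_lp_one b) hg

theorem exists_lp_one_eq {α : Type*} {c : α → ℂ} (hc : Summable fun p => ‖c p‖) :
    ∃ b : lp (fun _ : α => ℂ) 1, ⇑b = c :=
  ⟨⟨c, (memℓp_gen_iff (p := 1) (by simp)).mpr (by simpa using hc)⟩, rfl⟩

/-- The space of absolutely summable families of coefficients of power series `ℂ^ι → ℂ^ι`:
the entry `(α, j)` is the coefficient of the monomial `z ^ α` in the `j`-th component. -/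
abbrev CoeffSpace (ι : Type*) := lp (fun _ : (ι → ℕ) × ι => ℂ) 1

variable {ι : Type*} {T : Set ((ι → ℕ) × ι)} {z : ι → ℂ} {R R' M : ℝ}

theorem mk_left_injective (j : ι) : Function.Injective fun α : ι → ℕ => (α, j) :=
  fun _ _ h => congrArg Prod.fst h

theorem summable_norm_component (b : CoeffSpace ι) (j : ι) :
    Summable fun α => ‖b (α, j)‖ :=
  (hasSum_norm_lp_one b).summable.comp_injective (mk_left_injective j)

theorem tsum_norm_component_le (b : CoeffSpace ι) (j : ι) :
    ∑' α, ‖b (α, j)‖ ≤ ‖b‖ :=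
  (tsum_comp_le_tsum_of_inj (hasSum_norm_lp_one b).summable (fun _ => norm_nonneg _)
    (mk_left_injective j)).trans_eq (hasSum_norm_lp_one b).tsum_eq

variable [Fintype ι]

/-- The sum of the terms with index in `T` of the power series with coefficients `b`. -/
def partialSeries (T : Set ((ι → ℕ) × ι)) (b : CoeffSpace ι) (z : ι → ℂ) : ι → ℂ :=
  fun j => ∑' α, T.indicator b (α, j) * multiPow α z

theorem norm_partialSeries_term_le (hT : ∀ p ∈ T, R ^ ∑ i, p.1 i ≤ M) (hM : 0 ≤ M)
    (b : CoeffSpace ι) (hz : ‖z‖ ≤ R) (j : ι) (α : ι → ℕ) :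
    ‖T.indicator b (α, j) * multiPow α z‖ ≤ M * ‖b (α, j)‖ := by
  by_cases h : (α, j) ∈ T
  · rw [Set.indicator_of_mem h, norm_mul, mul_comm]
    gcongr
    exact (norm_multiPow_le α z).trans ((pow_le_pow_left₀ (norm_nonneg z) hz _).trans (hT _ h))
  · rw [Set.indicator_of_notMem h, zero_mul, norm_zero]
    positivity

theorem hasSum_partialSeries (hT : ∀ p ∈ T, R ^ ∑ i, p.1 i ≤ M) (hM : 0 ≤ M)
    (b : CoeffSpace ι) (hz : ‖z‖ ≤ R) (j : ι) :
    HasSum (fun α => T.indicator b (α, j) * multiPow α z) (partialSeries T b z j) :=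
  (Summable.of_norm_bounded ((summable_norm_component b j).mul_left M)
    (norm_partialSeries_term_le hT hM b hz j)).hasSum

theorem norm_partialSeries_le (hT : ∀ p ∈ T, R ^ ∑ i, p.1 i ≤ M) (hM : 0 ≤ M)
    (b : CoeffSpace ι) (hz : ‖z‖ ≤ R) : ‖partialSeries T b z‖ ≤ M * ‖b‖ := by
  rw [pi_norm_le_iff_of_nonneg (by positivity)]
  intro j
  calc ‖partialSeries T b z j‖
    _ ≤ ∑' α, M * ‖b (α, j)‖ :=
        tsum_of_norm_bounded ((summable_norm_component b j).mul_left M).hasSum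
          (norm_partialSeries_term_le hT hM b hz j)
    _ ≤ M * ‖b‖ := by
        rw [tsum_mul_left]
        gcongr
        exact tsum_norm_component_le b j

theorem partialSeries_sub (hT : ∀ p ∈ T, R ^ ∑ i, p.1 i ≤ M) (hM : 0 ≤ M)
    (b b' : CoeffSpace ι) (hz : ‖z‖ ≤ R) :
    partialSeries T (b - b') z = partialSeries T b z - partialSeries T b' z := by
  funext j
  refine (((hasSum_partialSeries hT hM b hz j).sub
    (hasSum_partialSeries hT hM b' hz j)).congr_fun fun α => ?_).tsum_eq
  rw [lp.coeFn_sub, Set.indicator_sub', Pi.sub_apply, sub_mul]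

theorem partialSeries_zero (T : Set ((ι → ℕ) × ι)) (z : ι → ℂ) : partialSeries T 0 z = 0 := by
  funext j
  simp [partialSeries, Set.indicator]

theorem norm_fderiv_le_of_norm_le {E F : Type*} [NormedAddCommGroup E] [NormedSpace ℂ E]
    [NormedAddCommGroup F] [NormedSpace ℂ F] {g : E → F} {x : E} (hR : R' < R)
    (hg : DifferentiableOn ℂ g (ball 0 R)) (hM : ∀ z ∈ ball (0 : E) R, ‖g z‖ ≤ M)
    (hx : ‖x‖ ≤ R') : ‖fderiv ℂ g x‖ ≤ 2 * M / (R - R') := by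
  have hsub : ball x (R - R') ⊆ ball (0 : E) R :=
    ball_subset_ball' (by rw [dist_zero_right]; linarith)
  refine Complex.norm_fderiv_le_div_of_mapsTo_ball (hg.mono hsub) (fun y hy => ?_)
    (sub_pos.mpr hR)
  rw [mem_closedBall, dist_eq_norm]
  linarith [norm_sub_le (g y) (g x), hM y (hsub hy),
    hM x (hsub (mem_ball_self (sub_pos.mpr hR)))]

theorem norm_sub_le_of_norm_le {E F : Type*} [NormedAddCommGroup E] [NormedSpace ℂ E]
    [NormedAddCommGroup F] [NormedSpace ℂ F] {g : E → F} {x y : E} (hR : R' < R)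
    (hg : DifferentiableOn ℂ g (ball 0 R)) (hM : ∀ z ∈ ball (0 : E) R, ‖g z‖ ≤ M)
    (hx : ‖x‖ ≤ R') (hy : ‖y‖ ≤ R') : ‖g x - g y‖ ≤ 2 * M / (R - R') * ‖x - y‖ :=
  (convex_closedBall (0 : E) R').norm_image_sub_le_of_norm_fderiv_le (𝕜 := ℂ)
    (fun _ hz => hg.differentiableAt (isOpen_ball.mem_nhds (closedBall_subset_ball hR hz)))
    (fun _ hz => norm_fderiv_le_of_norm_le hR hg hM (mem_closedBall_zero_iff.mp hz))
    (mem_closedBall_zero_iff.mpr hy) (mem_closedBall_zero_iff.mpr hx)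

theorem differentiable_multiPow (α : ι → ℕ) : Differentiable ℂ fun z : ι → ℂ => multiPow α z := by
  unfold multiPow
  fun_prop

theorem differentiableOn_partialSeries (hT : ∀ p ∈ T, R ^ ∑ i, p.1 i ≤ M) (hM : 0 ≤ M)
    (b : CoeffSpace ι) : DifferentiableOn ℂ (partialSeries T b) (ball 0 R) := by
  intro x hx
  obtain ⟨R', hxR', hR'⟩ := exists_between (mem_ball_zero_iff.mp hx)
  refine (differentiableAt_pi.mpr fun j => ?_).differentiableWithinAt
  have hterm (α : ι → ℕ) : Differentiable ℂ fun z => T.indicator b (α, j) * multiPow α z :=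
    (differentiable_multiPow α).const_mul _
  have hderiv := hasFDerivAt_tsum_of_isPreconnected (s := ball (0 : ι → ℂ) R')
    (u := fun α => 2 * (M * ‖b (α, j)‖) / (R - R'))
    ((((summable_norm_component b j).mul_left M).mul_left 2).div_const _) isOpen_ball
    (convex_ball _ _).isPreconnected (fun α z _ => (hterm α z).hasFDerivAt)
    (fun α z hz => norm_fderiv_le_of_norm_le hR' (hterm α).differentiableOn
      (fun w hw => norm_partialSeries_term_le hT hM b (mem_ball_zero_iff.mp hw).le j α)
      (mem_ball_zero_iff.mp hz).le)
    (mem_ball_zero_iff.mpr hxR')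
    (hasSum_partialSeries hT hM b (mem_ball_zero_iff.mp hx).le j).summable
    (mem_ball_zero_iff.mpr hxR')
  exact hderiv.differentiableAt

theorem norm_partialSeries_sub_le (hT : ∀ p ∈ T, R ^ ∑ i, p.1 i ≤ M) (hM : 0 ≤ M)
    (b : CoeffSpace ι) (hR : R' < R) {x y : ι → ℂ} (hx : ‖x‖ ≤ R') (hy : ‖y‖ ≤ R') :
    ‖partialSeries T b x - partialSeries T b y‖ ≤ 2 * (M * ‖b‖) / (R - R') * ‖x - y‖ :=
  norm_sub_le_of_norm_le hR (differentiableOn_partialSeries hT hM b)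
    (fun _ hz => norm_partialSeries_le hT hM b (mem_ball_zero_iff.mp hz).le) hx hy

theorem norm_partialSeries_second_difference_le (hT : ∀ p ∈ T, R ^ ∑ i, p.1 i ≤ M) (hM : 0 ≤ M)
    (b b' : CoeffSpace ι) (hR : R' < R) {x y : ι → ℂ} (hx : ‖x‖ ≤ R') (hy : ‖y‖ ≤ R') :
    ‖(partialSeries T b x - partialSeries T b' x) - (partialSeries T b y - partialSeries T b' y)‖ ≤
      2 * (M * ‖b - b'‖) / (R - R') * ‖x - y‖ := by
  rw [← partialSeries_sub hT hM b b' (hx.trans hR.le),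
    ← partialSeries_sub hT hM b b' (hy.trans hR.le)]
  exact norm_partialSeries_sub_le hT hM (b - b') hR hx hy

end CoeffSpace

/-! ### Subresonant monomials -/

section Subresonant

variable {ι : Type*} [Fintype ι] {lam : ι → ℂ}

/-- The index `(α, j)` is subresonant for the diagonal map `lam` if `|lam j| ≤ |lam ^ α|`.
Under conjugation by powers of the diagonal map, exactly the corresponding terms
`z ^ α` of the `j`-th component stay bounded. -/
def subresonant (lam : ι → ℂ) : Set ((ι → ℕ) × ι) := {p | ‖lam p.2‖ ≤ ‖multiPow p.1 lam‖}

theorem exists_norm_multiPow_le_of_lt_degree (h0 : ∀ j, lam j ≠ 0) (h1 : ‖lam‖ < 1) {c : ℝ}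
    (hc : 0 < c) :
    ∃ m : ℕ, ∀ p : (ι → ℕ) × ι, m < ∑ i, p.1 i → ‖multiPow p.1 lam‖ ≤ c * ‖lam p.2‖ := by
  have hsmall : ∀ᶠ n in atTop, ∀ j, ‖lam‖ ^ n ≤ c * ‖lam j‖ := eventually_all.mpr fun j =>
    (tendsto_pow_atTop_nhds_zero_of_lt_one (norm_nonneg _) h1).eventually_le_const
      (mul_pos hc (norm_pos_iff.mpr (h0 j)))
  obtain ⟨m, hm⟩ := eventually_atTop.mp hsmall
  exact ⟨m, fun p hp => (norm_multiPow_le p.1 lam).trans (hm _ hp.le p.2)⟩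

theorem exists_degree_le_of_mem_subresonant (h0 : ∀ j, lam j ≠ 0) (h1 : ‖lam‖ < 1) :
    ∃ m : ℕ, ∀ p ∈ subresonant lam, ∑ i, p.1 i ≤ m := by
  obtain ⟨m, hm⟩ := exists_norm_multiPow_le_of_lt_degree h0 h1 one_half_pos
  refine ⟨m, fun p (hp : ‖lam p.2‖ ≤ ‖multiPow p.1 lam‖) => not_lt.mp fun hlt => ?_⟩
  linarith [hm p hlt, norm_pos_iff.mpr (h0 p.2)]

theorem pow_degree_le_pow {m : ℕ} (hm : ∀ p ∈ subresonant lam, ∑ i, p.1 i ≤ m) {R : ℝ}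
    (hR : 1 ≤ R) : ∀ p ∈ subresonant lam, R ^ ∑ i, p.1 i ≤ R ^ m :=
  fun p hp => pow_le_pow_right₀ hR (hm p hp)

theorem finite_setOf_degree_le (m : ℕ) : {p : (ι → ℕ) × ι | ∑ i, p.1 i ≤ m}.Finite := by
  classical
  refine ((Set.finite_Iic fun _ : ι => m).prod Set.finite_univ).subset
    fun p hp => ⟨fun i => ?_, trivial⟩
  exact (Finset.single_le_sum (fun _ _ => Nat.zero_le _) (Finset.mem_univ i)).trans hp

theorem exists_norm_multiPow_le_of_notMem_subresonant (h0 : ∀ j, lam j ≠ 0) (h1 : ‖lam‖ < 1) :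
    ∃ θ : ℝ, 0 ≤ θ ∧ θ < 1 ∧ ∀ p ∉ subresonant lam, ‖multiPow p.1 lam‖ ≤ θ * ‖lam p.2‖ := by
  obtain ⟨m, hm⟩ := exists_norm_multiPow_le_of_lt_degree h0 h1 one_half_pos
  have hlow : {p : (ι → ℕ) × ι | p ∉ subresonant lam ∧ ∑ i, p.1 i ≤ m}.Finite :=
    (finite_setOf_degree_le m).subset fun p hp => hp.2
  have hlow_ratio : ∀ p ∈ hlow.toFinset, ∀ᶠ θ in 𝓝[<] (1 : ℝ),
      ‖multiPow p.1 lam‖ ≤ θ * ‖lam p.2‖ := fun p hp => by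
    have hlt : ‖multiPow p.1 lam‖ < 1 * ‖lam p.2‖ := by
      simpa [subresonant] using (hlow.mem_toFinset.mp hp).1
    have hcont : Tendsto (fun θ : ℝ => θ * ‖lam p.2‖) (𝓝[<] 1) (𝓝 (1 * ‖lam p.2‖)) :=
      (continuous_id.mul continuous_const).continuousWithinAt
    exact hcont.eventually_const_le hlt
  obtain ⟨θ, hθ_low, hθ⟩ := (((hlow.toFinset.eventually_all).mpr hlow_ratio).and
    (Ioo_mem_nhdsLT one_half_lt_one)).exists
  refine ⟨θ, one_half_pos.le.trans hθ.1.le, hθ.2, fun p hp => ?_⟩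
  rcases le_or_gt (∑ i, p.1 i) m with hdeg | hdeg
  · exact hθ_low p (hlow.mem_toFinset.mpr ⟨hp, hdeg⟩)
  · exact (hm p hdeg).trans (by gcongr; exact hθ.1.le)

end Subresonant

/-! ### The conjugacy equation -/

theorem exists_seq_eq_of_dist_le {X : Type*} [MetricSpace X] [CompleteSpace X] [BoundedSpace X]
    [Nonempty X] {q : ℝ} (hq : q < 1) {step : ℕ → X → X → X}
    (hstep : ∀ n x y x' y', dist (step n x y) (step n x' y') ≤ q * max (dist x x') (dist y y')) :
    ∃ b : ℕ → X, ∀ n, b n = step n (b n) (b (n + 1)) := by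
  let Φ (b : BoundedContinuousFunction ℕ X) : BoundedContinuousFunction ℕ X :=
    .mkOfDiscrete (fun n => step n (b n) (b (n + 1))) (diam (Set.univ : Set X))
      fun _ _ => dist_le_diam_of_mem (Bornology.IsBounded.all _) trivial trivial
  have hΦ : ContractingWith q.toNNReal Φ := by
    refine ⟨by rwa [Real.toNNReal_lt_one], LipschitzWith.of_dist_le_mul fun b b' => ?_⟩
    refine (BoundedContinuousFunction.dist_le (by positivity)).mpr fun n => ?_
    refine (hstep n _ _ _ _).trans ?_
    gcongr
    · exact Real.le_coe_toNNReal q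
    · exact max_le (BoundedContinuousFunction.dist_coe_le_dist n)
        (BoundedContinuousFunction.dist_coe_le_dist (n + 1))
  have : Nonempty (BoundedContinuousFunction ℕ X) :=
    ⟨.const ℕ (Classical.arbitrary X)⟩
  let b : BoundedContinuousFunction ℕ X := hΦ.fixedPoint Φ
  exact ⟨b, fun n => (DFunLike.congr_fun hΦ.fixedPoint_isFixedPt n).symm⟩

section Homological

variable {k : ℕ} {lam : Fin k → ℂ} {r θ B : ℝ} {G G' : (Fin k → ℂ) → Fin k → ℂ}
  {b b' c c' : CoeffSpace (Fin k)}

open Classical in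
/-- The coefficient `β` of index `p = (α, j)` determined by the homological equation: it solves
`0 = g + lam ^ α * β` if `p` is subresonant, and `β = lam ^ α / lam j * γ + g` otherwise. -/
def homologicalCoeff (lam : Fin k → ℂ) (p : (Fin k → ℕ) × Fin k) (γ g : ℂ) : ℂ :=
  if p ∈ subresonant lam then -(multiPow p.1 lam)⁻¹ * g
  else multiPow p.1 lam / lam p.2 * γ + g

theorem homologicalCoeff_sub (p : (Fin k → ℕ) × Fin k) (γ γ' g g' : ℂ) :
    homologicalCoeff lam p (γ - γ') (g - g') =
      homologicalCoeff lam p γ g - homologicalCoeff lam p γ' g' := by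
  unfold homologicalCoeff
  split_ifs <;> ring

theorem one_le_norm_inv (h0 : ∀ j, lam j ≠ 0) (h1 : ‖lam‖ ≤ 1) (j : Fin k) : 1 ≤ ‖lam⁻¹‖ :=
  calc 1 ≤ ‖lam j‖⁻¹ :=
        (one_le_inv₀ (norm_pos_iff.mpr (h0 j))).mpr ((norm_le_pi_norm lam j).trans h1)
    _ = ‖lam⁻¹ j‖ := by rw [Pi.inv_apply, norm_inv]
    _ ≤ ‖lam⁻¹‖ := norm_le_pi_norm lam⁻¹ j

theorem norm_multiPow_inv_le (h0 : ∀ j, lam j ≠ 0) {p : (Fin k → ℕ) × Fin k}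
    (hp : p ∈ subresonant lam) : ‖(multiPow p.1 lam)⁻¹‖ ≤ ‖lam⁻¹‖ :=
  calc ‖(multiPow p.1 lam)⁻¹‖ = ‖multiPow p.1 lam‖⁻¹ := norm_inv _
    _ ≤ ‖lam p.2‖⁻¹ := inv_anti₀ (norm_pos_iff.mpr (h0 p.2)) hp
    _ = ‖lam⁻¹ p.2‖ := by rw [Pi.inv_apply, norm_inv]
    _ ≤ ‖lam⁻¹‖ := norm_le_pi_norm lam⁻¹ p.2

theorem norm_homologicalCoeff_le (h0 : ∀ j, lam j ≠ 0) (h1 : ‖lam‖ ≤ 1) (hθ0 : 0 ≤ θ)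
    (hθ : ∀ p ∉ subresonant lam, ‖multiPow p.1 lam‖ ≤ θ * ‖lam p.2‖) (p : (Fin k → ℕ) × Fin k)
    (γ g : ℂ) : ‖homologicalCoeff lam p γ g‖ ≤ θ * ‖γ‖ + ‖lam⁻¹‖ * ‖g‖ := by
  unfold homologicalCoeff
  split_ifs with hp
  · calc ‖-(multiPow p.1 lam)⁻¹ * g‖ = ‖(multiPow p.1 lam)⁻¹‖ * ‖g‖ := by rw [norm_mul, norm_neg]
      _ ≤ ‖lam⁻¹‖ * ‖g‖ := by gcongr; exact norm_multiPow_inv_le h0 hp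
      _ ≤ θ * ‖γ‖ + ‖lam⁻¹‖ * ‖g‖ := le_add_of_nonneg_left (by positivity)
  · have hratio : ‖multiPow p.1 lam / lam p.2‖ ≤ θ := by
      rw [norm_div, div_le_iff₀ (norm_pos_iff.mpr (h0 p.2))]
      exact hθ p hp
    calc ‖multiPow p.1 lam / lam p.2 * γ + g‖
      _ ≤ ‖multiPow p.1 lam / lam p.2‖ * ‖γ‖ + ‖g‖ := by
          rw [← norm_mul]
          exact norm_add_le _ _
      _ ≤ θ * ‖γ‖ + ‖lam⁻¹‖ * ‖g‖ := by
          gcongr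
          exact le_mul_of_one_le_left (norm_nonneg g) (one_le_norm_inv h0 h1 p.2)

theorem indicator_mul_eq_of_eq_homologicalCoeff (h0 : ∀ j, lam j ≠ 0) {p : (Fin k → ℕ) × Fin k}
    {g : ℂ} (hb : b p = homologicalCoeff lam p (c p) g) :
    (subresonant lam)ᶜ.indicator b p = (lam p.2)⁻¹ * ((subresonant lam)ᶜ.indicator c p *
      multiPow p.1 lam) + g + (subresonant lam).indicator b p * multiPow p.1 lam := by
  by_cases hp : p ∈ subresonant lam
  · have hne := multiPow_ne_zero h0 p.1
    simp only [Set.indicator, Set.mem_compl_iff, hp, not_true_eq_false, if_true, if_false, hb,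
      homologicalCoeff]
    field_simp
    ring
  · simp only [Set.indicator, Set.mem_compl_iff, hp, not_false_eq_true, if_true, if_false, hb,
      homologicalCoeff]
    ring

/-- The family `b` solves, for the given `c` and `G`, the homological equation
`u z = lam⁻¹ * u' (lam * z) + G z + v (lam * z)`, where `u` and `v` are the non-subresonant and the
subresonant part of the series of `b`, and `u'` is the non-subresonant part of the series of `c`. -/
def SolvesHomological (lam : Fin k → ℂ) (r : ℝ) (G : (Fin k → ℂ) → Fin k → ℂ)
    (c b : CoeffSpace (Fin k)) : Prop :=
  ∀ p, b p = homologicalCoeff lam p (c p) (cauchyCoeff r (fun z => G z p.2) p.1)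

theorem SolvesHomological.sub (hr : 0 < r) (hG : ContinuousOn G (closedBall 0 r))
    (hG' : ContinuousOn G' (closedBall 0 r)) (hb : SolvesHomological lam r G c b)
    (hb' : SolvesHomological lam r G' c' b') :
    SolvesHomological lam r (G - G') (c - c') (b - b') := fun p => by
  have hcoeff := cauchyCoeff_sub (g := fun z => G z p.2) (g' := fun z => G' z p.2) hr
    ((continuous_apply p.2).comp_continuousOn hG) ((continuous_apply p.2).comp_continuousOn hG')
    p.1
  calc (b - b') p = b p - b' p := rfl
    _ = _ := by rw [hb p, hb' p, ← homologicalCoeff_sub, ← hcoeff]; rfl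

/-- The sum over all indices `(α, j)` of `r⁻¹ ^ |α|`: by the Cauchy estimates, this factor turns a
sup bound on the polydisc of radius `r > 1` into an `ℓ¹` bound on Taylor coefficients. -/
def geomConst (k : ℕ) (r : ℝ) : ℝ := ∑' p : (Fin k → ℕ) × Fin k, r⁻¹ ^ ∑ i, p.1 i

theorem geomConst_nonneg (k : ℕ) (hr : 0 ≤ r) : 0 ≤ geomConst k r :=
  tsum_nonneg fun _ => by positivity

theorem hasSum_geomConst (hr : 1 < r) :
    HasSum (fun p : (Fin k → ℕ) × Fin k => r⁻¹ ^ ∑ i, p.1 i) (geomConst k r) := by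
  have hgeom : Summable fun α : Fin k → ℕ => r⁻¹ ^ ∑ i, α i := by
    simpa only [multiPow_const] using Summable.of_norm (summable_norm_multiPow
      (x := fun _ : Fin k => r⁻¹) fun _ => by
        rw [norm_inv, Real.norm_of_nonneg (by positivity)]
        exact inv_lt_one_of_one_lt₀ hr)
  have hone : Summable fun _ : Fin k => (1 : ℝ) := (hasSum_fintype _).summable
  have hprod := hgeom.mul_of_nonneg hone (fun α => by positivity) fun _ => zero_le_one
  simp only [mul_one] at hprod
  exact hprod.hasSum

theorem norm_homologicalCoeff_cauchyCoeff_le (h0 : ∀ j, lam j ≠ 0) (h1 : ‖lam‖ ≤ 1) (hθ0 : 0 ≤ θ)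
    (hθ : ∀ p ∉ subresonant lam, ‖multiPow p.1 lam‖ ≤ θ * ‖lam p.2‖) (hr : 0 < r)
    (hB : ∀ z ∈ closedBall (0 : Fin k → ℂ) r, ‖G z‖ ≤ B) (p : (Fin k → ℕ) × Fin k) (γ : ℂ) :
    ‖homologicalCoeff lam p γ (cauchyCoeff r (fun z => G z p.2) p.1)‖ ≤
      θ * ‖γ‖ + ‖lam⁻¹‖ * B * r⁻¹ ^ ∑ i, p.1 i := by
  rw [mul_assoc ‖lam⁻¹‖]
  refine (norm_homologicalCoeff_le h0 h1 hθ0 hθ p _ _).trans ?_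
  gcongr
  exact norm_cauchyCoeff_le hr (fun z hz => (norm_le_pi_norm (G z) p.2).trans (hB z hz)) p.1

theorem hasSum_homological_majorant (hr : 1 < r) (c : CoeffSpace (Fin k)) (θ D : ℝ) :
    HasSum (fun p => θ * ‖c p‖ + D * r⁻¹ ^ ∑ i, p.1 i) (θ * ‖c‖ + D * geomConst k r) :=
  ((hasSum_norm_lp_one c).mul_left θ).add ((hasSum_geomConst hr).mul_left D)

theorem SolvesHomological.norm_le (h0 : ∀ j, lam j ≠ 0) (h1 : ‖lam‖ ≤ 1) (hθ0 : 0 ≤ θ)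
    (hθ : ∀ p ∉ subresonant lam, ‖multiPow p.1 lam‖ ≤ θ * ‖lam p.2‖) (hr : 1 < r)
    (hB : ∀ z ∈ closedBall (0 : Fin k → ℂ) r, ‖G z‖ ≤ B)
    (hb : SolvesHomological lam r G c b) :
    ‖b‖ ≤ θ * ‖c‖ + ‖lam⁻¹‖ * B * geomConst k r :=
  norm_lp_one_le (hasSum_homological_majorant hr c θ _) fun p => by
    rw [hb p]
    exact norm_homologicalCoeff_cauchyCoeff_le h0 h1 hθ0 hθ (by positivity) hB p _

theorem exists_solvesHomological (h0 : ∀ j, lam j ≠ 0) (h1 : ‖lam‖ ≤ 1) (hθ0 : 0 ≤ θ)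
    (hθ : ∀ p ∉ subresonant lam, ‖multiPow p.1 lam‖ ≤ θ * ‖lam p.2‖) (hr : 1 < r)
    (hG : ContinuousOn G (closedBall 0 r)) (c : CoeffSpace (Fin k)) :
    ∃ b, SolvesHomological lam r G c b := by
  obtain ⟨B, hB⟩ := (isCompact_closedBall (0 : Fin k → ℂ) r).exists_bound_of_continuousOn hG
  obtain ⟨b, hb⟩ := exists_lp_one_eq (.of_nonneg_of_le (fun _ => norm_nonneg _)
    (fun p => norm_homologicalCoeff_cauchyCoeff_le h0 h1 hθ0 hθ (by positivity) hB p (c p))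
    (hasSum_homological_majorant hr c θ _).summable)
  exact ⟨b, congrFun hb⟩

theorem SolvesHomological.partialSeries_eq (h0 : ∀ j, lam j ≠ 0) (h1 : ‖lam‖ ≤ 1) {m : ℕ}
    (hm : ∀ p ∈ subresonant lam, ∑ i, p.1 i ≤ m) (hr : 1 < r)
    (hG : DifferentiableOn ℂ G (closedBall 0 r)) (hb : SolvesHomological lam r G c b)
    {z : Fin k → ℂ} (hz : ‖z‖ ≤ 1) :
    partialSeries (subresonant lam)ᶜ b z =
      lam⁻¹ * partialSeries (subresonant lam)ᶜ c (lam * z) + G z +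
        partialSeries (subresonant lam) b (lam * z) := by
  have hlz : ‖lam * z‖ ≤ 1 := (norm_mul_le _ _).trans (mul_le_one₀ h1 (norm_nonneg z) hz)
  have hone : ∀ p ∈ (subresonant lam)ᶜ, (1 : ℝ) ^ ∑ i, p.1 i ≤ 1 := fun _ _ => (one_pow _).le
  funext j
  have hu := hasSum_partialSeries hone zero_le_one b hz j
  have hu' := hasSum_partialSeries hone zero_le_one c hlz j
  have hv := hasSum_partialSeries (pow_degree_le_pow hm le_rfl) (by positivity) b hlz j
  have hGsum := hasSum_cauchyCoeff (g := fun z => G z j) (by positivity)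
    (differentiableOn_pi.mp hG j) (hz.trans_lt hr)
  refine hu.unique ((((hu'.mul_left (lam j)⁻¹).add hGsum).add hv).congr_fun fun α => ?_)
  rw [indicator_mul_eq_of_eq_homologicalCoeff h0 (hb (α, j)), multiPow_mul]
  ring

end Homological

section ConjugacyEquation

variable {k m : ℕ} {lam x y : Fin k → ℂ} {r κ η δ d θ : ℝ} {f : (Fin k → ℂ) → Fin k → ℂ}
  {b b' c c' s s' : CoeffSpace (Fin k)}

/-- For `u'` the non-subresonant part of the series of `c` and `v` the subresonant part of that of
`b`, this is what replacing `y = lam * z` by `x = f z` adds to the right-hand side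
`lam⁻¹ * (x + u' x) + v (x + u' x)` of the conjugacy equation, beyond its linearization
`z + lam⁻¹ * u' y + v y`. -/
def remainder (lam : Fin k → ℂ) (c b : CoeffSpace (Fin k)) (x y : Fin k → ℂ) : Fin k → ℂ :=
  lam⁻¹ * (x - y) + lam⁻¹ * (partialSeries (subresonant lam)ᶜ c x -
    partialSeries (subresonant lam)ᶜ c y) + (partialSeries (subresonant lam) b
      (x + partialSeries (subresonant lam)ᶜ c x) - partialSeries (subresonant lam) b y)

theorem remainder_zero (lam x y : Fin k → ℂ) : remainder lam 0 0 x y = lam⁻¹ * (x - y) := by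
  simp [remainder, partialSeries_zero]

/-- A bound for the Lipschitz constant of `remainder` in the coefficients, relative to the size of
the coefficients and of `x - y`. -/
def remainderConst (lam : Fin k → ℂ) (κ : ℝ) (m : ℕ) : ℝ :=
  ‖lam⁻¹‖ * (2 / (1 - κ)) + 4 * 3 ^ m

theorem remainderConst_nonneg (lam : Fin k → ℂ) (hκ : κ < 1) (m : ℕ) :
    0 ≤ remainderConst lam κ m := by
  have := sub_pos.mpr hκ
  unfold remainderConst
  positivity

theorem norm_compl_subresonant_series_le (lam : Fin k → ℂ) (c : CoeffSpace (Fin k))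
    (hx : ‖x‖ ≤ 1) : ‖partialSeries (subresonant lam)ᶜ c x‖ ≤ ‖c‖ := by
  simpa using norm_partialSeries_le (fun _ _ => (one_pow _).le) zero_le_one c hx

theorem norm_add_compl_subresonant_series_le_two (hc : ‖c‖ ≤ 1) (hx : ‖x‖ ≤ 1) :
    ‖x + partialSeries (subresonant lam)ᶜ c x‖ ≤ 2 := by
  linarith [norm_add_le x (partialSeries (subresonant lam)ᶜ c x),
    norm_compl_subresonant_series_le lam c hx]

theorem norm_subresonant_series_change_le (hm : ∀ p ∈ subresonant lam, ∑ i, p.1 i ≤ m)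
    (hδ : δ ≤ 1) (hc : ‖c‖ ≤ δ) (hc' : ‖c'‖ ≤ δ) (hb' : ‖b'‖ ≤ δ) (hbd : ‖b - b'‖ ≤ d)
    (hcd : ‖c - c'‖ ≤ d) (hx : ‖x‖ ≤ 1) (hy : ‖y‖ ≤ 1) (hxy : ‖x - y‖ ≤ η) :
    ‖(partialSeries (subresonant lam) b (x + partialSeries (subresonant lam)ᶜ c x) -
        partialSeries (subresonant lam) b y) -
      (partialSeries (subresonant lam) b' (x + partialSeries (subresonant lam)ᶜ c' x) -
        partialSeries (subresonant lam) b' y)‖ ≤ 4 * 3 ^ m * (η + δ) * d := by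
  have hd : 0 ≤ d := (norm_nonneg _).trans hbd
  have hη : 0 ≤ η := (norm_nonneg _).trans hxy
  have hδ0 : 0 ≤ δ := (norm_nonneg _).trans hc
  have : (0 : ℝ) < 3 - 2 := by norm_num
  have hT := pow_degree_le_pow hm (by norm_num : (1 : ℝ) ≤ 3)
  set u := partialSeries (subresonant lam)ᶜ c x
  set u' := partialSeries (subresonant lam)ᶜ c' x
  set v := partialSeries (subresonant lam) b
  set v' := partialSeries (subresonant lam) b'
  have hu : ‖x + u‖ ≤ 2 := norm_add_compl_subresonant_series_le_two (hc.trans hδ) hx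
  have hu' : ‖x + u'‖ ≤ 2 := norm_add_compl_subresonant_series_le_two (hc'.trans hδ) hx
  have huy : ‖x + u - y‖ ≤ η + δ := by
    rw [add_sub_right_comm]
    exact (norm_add_le _ _).trans
      (add_le_add hxy ((norm_compl_subresonant_series_le lam c hx).trans hc))
  have huu' : ‖x + u - (x + u')‖ ≤ d := by
    rw [add_sub_add_left_eq_sub,
      ← partialSeries_sub (fun _ _ => (one_pow _).le) zero_le_one c c' hx]
    exact (norm_compl_subresonant_series_le lam _ hx).trans hcd
  have hchange : ‖(v (x + u) - v' (x + u)) - (v y - v' y)‖ ≤ 2 * (3 ^ m * d) / (3 - 2) * (η + δ) :=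
    (norm_partialSeries_second_difference_le hT (by positivity) b b' (by norm_num) hu
      (hy.trans one_le_two)).trans (by gcongr)
  have hmove : ‖v' (x + u) - v' (x + u')‖ ≤ 2 * (3 ^ m * δ) / (3 - 2) * d :=
    (norm_partialSeries_sub_le hT (by positivity) b' (by norm_num) hu hu').trans (by gcongr)
  calc _ = ‖((v (x + u) - v' (x + u)) - (v y - v' y)) + (v' (x + u) - v' (x + u'))‖ := by
        congr 1; ring
    _ ≤ 2 * (3 ^ m * d) / (3 - 2) * (η + δ) + 2 * (3 ^ m * δ) / (3 - 2) * d :=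
        (norm_add_le _ _).trans (add_le_add hchange hmove)
    _ = 4 * 3 ^ m * (η + δ) * d - 2 * (3 ^ m * η * d) := by ring
    _ ≤ 4 * 3 ^ m * (η + δ) * d := sub_le_self _ (by positivity)

theorem norm_remainder_sub_le (hm : ∀ p ∈ subresonant lam, ∑ i, p.1 i ≤ m) (hκ : κ < 1)
    (hδ : δ ≤ 1) (hc : ‖c‖ ≤ δ) (hc' : ‖c'‖ ≤ δ) (hb' : ‖b'‖ ≤ δ) (hbd : ‖b - b'‖ ≤ d)
    (hcd : ‖c - c'‖ ≤ d) (hx : ‖x‖ ≤ κ) (hy : ‖y‖ ≤ κ) (hxy : ‖x - y‖ ≤ η) :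
    ‖remainder lam c b x y - remainder lam c' b' x y‖ ≤
      remainderConst lam κ m * (η + δ) * d := by
  have : 0 < 1 - κ := sub_pos.mpr hκ
  have hd : 0 ≤ d := (norm_nonneg _).trans hbd
  have hδ0 : 0 ≤ δ := (norm_nonneg _).trans hc
  have hlinear : ‖lam⁻¹ * ((partialSeries (subresonant lam)ᶜ c x -
      partialSeries (subresonant lam)ᶜ c' x) - (partialSeries (subresonant lam)ᶜ c y -
        partialSeries (subresonant lam)ᶜ c' y))‖ ≤ ‖lam⁻¹‖ * (2 / (1 - κ)) * (η + δ) * d := by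
    calc _ ≤ ‖lam⁻¹‖ * (2 * (1 * ‖c - c'‖) / (1 - κ) * ‖x - y‖) :=
          (norm_mul_le _ _).trans (by
            gcongr
            exact norm_partialSeries_second_difference_le (fun _ _ => (one_pow _).le) zero_le_one
              c c' hκ hx hy)
      _ ≤ ‖lam⁻¹‖ * (2 * (1 * d) / (1 - κ) * (η + δ)) := by
          gcongr
          exact hxy.trans (le_add_of_nonneg_right hδ0)
      _ = ‖lam⁻¹‖ * (2 / (1 - κ)) * (η + δ) * d := by ring
  have hnonlinear := norm_subresonant_series_change_le hm hδ hc hc' hb' hbd hcd (hx.trans hκ.le)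
    (hy.trans hκ.le) hxy
  refine le_trans (le_of_eq ?_)
    ((norm_add_le _ _).trans ((add_le_add hlinear hnonlinear).trans_eq ?_))
  · congr 1
    unfold remainder
    ring
  · unfold remainderConst
    ring

/-- The map `f` is holomorphic on the closed polydisc of radius `r` about `0`, and there it is at
distance at most `η` from the diagonal linear map `lam`. -/
structure IsNearDiagonal (lam : Fin k → ℂ) (r η : ℝ) (f : (Fin k → ℂ) → Fin k → ℂ) : Prop where
  differentiableOn : DifferentiableOn ℂ f (closedBall 0 r)
  norm_sub_le : ∀ z ∈ closedBall (0 : Fin k → ℂ) r, ‖f z - lam * z‖ ≤ η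

namespace IsNearDiagonal

variable {z : Fin k → ℂ}

theorem norm_mul_le_of_mem (hf : IsNearDiagonal lam r η f) (hκ : ‖lam‖ * r + η ≤ κ)
    (hz : z ∈ closedBall 0 r) : ‖lam * z‖ ≤ κ := by
  have hη : 0 ≤ η := (norm_nonneg _).trans (hf.norm_sub_le z hz)
  calc ‖lam * z‖ ≤ ‖lam‖ * r :=
        (norm_mul_le _ _).trans (by gcongr; exact mem_closedBall_zero_iff.mp hz)
    _ ≤ κ := (le_add_of_nonneg_right hη).trans hκ

theorem norm_apply_le_of_mem (hf : IsNearDiagonal lam r η f) (hκ : ‖lam‖ * r + η ≤ κ)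
    (hz : z ∈ closedBall 0 r) : ‖f z‖ ≤ κ :=
  calc ‖f z‖ = ‖lam * z + (f z - lam * z)‖ := by rw [add_sub_cancel]
    _ ≤ ‖lam * z‖ + ‖f z - lam * z‖ := norm_add_le _ _
    _ ≤ ‖lam‖ * r + η := add_le_add ((norm_mul_le _ _).trans
        (by gcongr; exact mem_closedBall_zero_iff.mp hz)) (hf.norm_sub_le z hz)
    _ ≤ κ := hκ

theorem differentiableOn_remainder (hf : IsNearDiagonal lam r η f)
    (hm : ∀ p ∈ subresonant lam, ∑ i, p.1 i ≤ m) (hκ : ‖lam‖ * r + η ≤ κ) (hκ1 : κ < 1)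
    (hc : ‖c‖ ≤ 1) (b : CoeffSpace (Fin k)) :
    DifferentiableOn ℂ (fun z => remainder lam c b (f z) (lam * z)) (closedBall 0 r) := by
  have hlin : DifferentiableOn ℂ (fun z => lam * z) (closedBall 0 r) := by fun_prop
  have hu : DifferentiableOn ℂ (partialSeries (subresonant lam)ᶜ c) (ball 0 1) :=
    differentiableOn_partialSeries (fun _ _ => (one_pow _).le) zero_le_one c
  have hv : DifferentiableOn ℂ (partialSeries (subresonant lam) b) (ball 0 3) :=
    differentiableOn_partialSeries (pow_degree_le_pow hm (by norm_num)) (by positivity) b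
  have hfz : Set.MapsTo f (closedBall 0 r) (ball 0 1) := fun z hz =>
    mem_ball_zero_iff.mpr ((hf.norm_apply_le_of_mem hκ hz).trans_lt hκ1)
  have hlz : Set.MapsTo (lam * ·) (closedBall 0 r) (ball 0 1) := fun z hz =>
    mem_ball_zero_iff.mpr ((hf.norm_mul_le_of_mem hκ hz).trans_lt hκ1)
  have huf := hu.comp hf.differentiableOn hfz
  have hvf := hv.comp (hf.differentiableOn.add huf) fun z hz => mem_ball_zero_iff.mpr
    ((norm_add_compl_subresonant_series_le_two hc (mem_ball_zero_iff.mp (hfz hz)).le).trans_lt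
      (by norm_num))
  have hvl := hv.comp hlin fun z hz => ball_subset_ball (by norm_num) (hlz hz)
  exact (((hf.differentiableOn.sub hlin).const_mul _).add
    ((huf.sub (hu.comp hlin hlz)).const_mul _)).add (hvf.sub hvl)

theorem norm_sub_le_of_solvesHomological (hf : IsNearDiagonal lam r η f) (h0 : ∀ j, lam j ≠ 0)
    (h1 : ‖lam‖ ≤ 1) (hθ0 : 0 ≤ θ)
    (hθ : ∀ p ∉ subresonant lam, ‖multiPow p.1 lam‖ ≤ θ * ‖lam p.2‖)
    (hm : ∀ p ∈ subresonant lam, ∑ i, p.1 i ≤ m) (hr : 1 < r) (hκ : ‖lam‖ * r + η ≤ κ)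
    (hκ1 : κ < 1) (hδ : δ ≤ 1) (hc : ‖c‖ ≤ δ) (hc' : ‖c'‖ ≤ δ) (hb' : ‖b'‖ ≤ δ)
    (hbd : ‖b - b'‖ ≤ d) (hcd : ‖c - c'‖ ≤ d)
    (hs : SolvesHomological lam r (fun z => remainder lam c b (f z) (lam * z)) c s)
    (hs' : SolvesHomological lam r (fun z => remainder lam c' b' (f z) (lam * z)) c' s') :
    ‖s - s'‖ ≤ (θ + ‖lam⁻¹‖ * (remainderConst lam κ m * (η + δ)) * geomConst k r) * d := by
  have hsub := hs.sub (by positivity)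
    (hf.differentiableOn_remainder hm hκ hκ1 (hc.trans hδ) b).continuousOn
    (hf.differentiableOn_remainder hm hκ hκ1 (hc'.trans hδ) b').continuousOn hs'
  have hle := hsub.norm_le h0 h1 hθ0 hθ hr fun z hz => norm_remainder_sub_le hm hκ1 hδ hc hc' hb'
    hbd hcd (hf.norm_apply_le_of_mem hκ hz) (hf.norm_mul_le_of_mem hκ hz) (hf.norm_sub_le z hz)
  calc ‖s - s'‖ ≤ θ * d + ‖lam⁻¹‖ * (remainderConst lam κ m * (η + δ) * d) * geomConst k r :=
        hle.trans (by gcongr)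
    _ = _ := by ring

theorem norm_le_of_solvesHomological (hf : IsNearDiagonal lam r η f) (h0 : ∀ j, lam j ≠ 0)
    (h1 : ‖lam‖ ≤ 1) (hθ0 : 0 ≤ θ)
    (hθ : ∀ p ∉ subresonant lam, ‖multiPow p.1 lam‖ ≤ θ * ‖lam p.2‖)
    (hm : ∀ p ∈ subresonant lam, ∑ i, p.1 i ≤ m) (hr : 1 < r) (hκ : ‖lam‖ * r + η ≤ κ)
    (hκ1 : κ < 1) (hδ : δ ≤ 1) (hc : ‖c‖ ≤ δ) (hb : ‖b‖ ≤ δ)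
    (hs : SolvesHomological lam r (fun z => remainder lam c b (f z) (lam * z)) c s) :
    ‖s‖ ≤ (θ + ‖lam⁻¹‖ * (remainderConst lam κ m * (η + δ)) * geomConst k r) * δ +
      ‖lam⁻¹‖ * (‖lam⁻¹‖ * η) * geomConst k r := by
  have hδ0 : ‖(0 : CoeffSpace (Fin k))‖ ≤ δ := norm_zero.trans_le ((norm_nonneg c).trans hc)
  obtain ⟨s', hs'⟩ := exists_solvesHomological h0 h1 hθ0 hθ hr
    (hf.differentiableOn_remainder hm hκ hκ1 (hδ0.trans hδ) 0).continuousOn 0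
  have hdist : ‖s - s'‖ ≤ _ := hf.norm_sub_le_of_solvesHomological h0 h1 hθ0 hθ hm hr hκ hκ1 hδ hc
    hδ0 hδ0 ((sub_zero b).symm ▸ hb) ((sub_zero c).symm ▸ hc) hs hs'
  have hs'_norm : ‖s'‖ ≤ ‖lam⁻¹‖ * (‖lam⁻¹‖ * η) * geomConst k r := by
    have hle := hs'.norm_le (B := ‖lam⁻¹‖ * η) h0 h1 hθ0 hθ hr fun z hz => by
      rw [remainder_zero]
      exact (norm_mul_le _ _).trans (by gcongr; exact hf.norm_sub_le z hz)
    rwa [norm_zero, mul_zero, zero_add] at hle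
  calc ‖s‖ = ‖(s - s') + s'‖ := by rw [sub_add_cancel]
    _ ≤ _ := (norm_add_le _ _).trans (add_le_add hdist hs'_norm)

theorem add_partialSeries_eq (hf : IsNearDiagonal lam r η f) (h0 : ∀ j, lam j ≠ 0)
    (h1 : ‖lam‖ ≤ 1) (hm : ∀ p ∈ subresonant lam, ∑ i, p.1 i ≤ m) (hr : 1 < r)
    (hκ : ‖lam‖ * r + η ≤ κ) (hκ1 : κ < 1) (hc : ‖c‖ ≤ 1)
    (hb : SolvesHomological lam r (fun z => remainder lam c b (f z) (lam * z)) c b)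
    (hz : ‖z‖ ≤ 1) :
    z + partialSeries (subresonant lam)ᶜ b z =
      lam⁻¹ * (f z + partialSeries (subresonant lam)ᶜ c (f z)) +
        partialSeries (subresonant lam) b (f z + partialSeries (subresonant lam)ᶜ c (f z)) := by
  have hcancel : lam⁻¹ * (lam * z) = z := by
    funext j
    simp [h0 j]
  rw [hb.partialSeries_eq h0 h1 hm hr (hf.differentiableOn_remainder hm hκ hκ1 hc b) hz,
    remainder]
  linear_combination -hcancel

theorem exists_seq_solvesHomological {f : ℕ → (Fin k → ℂ) → Fin k → ℂ}
    (hf : ∀ n, IsNearDiagonal lam r η (f n)) (h0 : ∀ j, lam j ≠ 0) (h1 : ‖lam‖ ≤ 1) (hθ0 : 0 ≤ θ)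
    (hθ : ∀ p ∉ subresonant lam, ‖multiPow p.1 lam‖ ≤ θ * ‖lam p.2‖)
    (hm : ∀ p ∈ subresonant lam, ∑ i, p.1 i ≤ m) (hr : 1 < r) (hκ : ‖lam‖ * r + η ≤ κ)
    (hκ1 : κ < 1) (hδ0 : 0 ≤ δ) (hδ : δ ≤ 1) {q : ℝ} (hq1 : q < 1)
    (hq : θ + ‖lam⁻¹‖ * (remainderConst lam κ m * (η + δ)) * geomConst k r ≤ q)
    (hqδ : q * δ + ‖lam⁻¹‖ * (‖lam⁻¹‖ * η) * geomConst k r ≤ δ) :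
    ∃ b : ℕ → CoeffSpace (Fin k), (∀ n, ‖b n‖ ≤ δ) ∧ ∀ n, SolvesHomological lam r
      (fun z => remainder lam (b (n + 1)) (b n) (f n z) (lam * z)) (b (n + 1)) (b n) := by
  have hstep : ∀ n (b c : closedBall (0 : CoeffSpace (Fin k)) δ),
      ∃ s : closedBall (0 : CoeffSpace (Fin k)) δ,
        SolvesHomological lam r (fun z => remainder lam c b (f n z) (lam * z)) c s := by
    rintro n ⟨b, hb⟩ ⟨c, hc⟩
    rw [mem_closedBall_zero_iff] at hb hc
    obtain ⟨s, hs⟩ := exists_solvesHomological h0 h1 hθ0 hθ hr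
      ((hf n).differentiableOn_remainder hm hκ hκ1 (hc.trans hδ) b).continuousOn c
    exact ⟨⟨s, mem_closedBall_zero_iff.mpr (((hf n).norm_le_of_solvesHomological h0 h1 hθ0 hθ hm
      hr hκ hκ1 hδ hc hb hs).trans (le_trans (by gcongr) hqδ))⟩, hs⟩
  choose step hstep using hstep
  have hcontr : ∀ n b c b' c', dist (step n b c) (step n b' c') ≤
      q * max (dist b b') (dist c c') := fun n b c b' c' => by
    have hlip := (hf n).norm_sub_le_of_solvesHomological h0 h1 hθ0 hθ hm hr hκ hκ1 hδ
      (mem_closedBall_zero_iff.mp c.2) (mem_closedBall_zero_iff.mp c'.2)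
      (mem_closedBall_zero_iff.mp b'.2) ((dist_eq_norm _ _).symm.trans_le (le_max_left _ _))
      ((dist_eq_norm _ _).symm.trans_le (le_max_right _ _)) (hstep n b c) (hstep n b' c')
    rw [← dist_eq_norm] at hlip
    exact hlip.trans (mul_le_mul_of_nonneg_right hq (by positivity))
  have : CompleteSpace (closedBall (0 : CoeffSpace (Fin k)) δ) :=
    isClosed_closedBall.completeSpace_coe
  have : BoundedSpace (closedBall (0 : CoeffSpace (Fin k)) δ) :=
    isBounded_closedBall.boundedSpace_subtype
  have : Nonempty (closedBall (0 : CoeffSpace (Fin k)) δ) := ⟨0, mem_closedBall_self hδ0⟩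
  obtain ⟨b, hb⟩ := exists_seq_eq_of_dist_le hq1 hcontr
  refine ⟨fun n => b n, fun n => mem_closedBall_zero_iff.mp (b n).2, fun n => ?_⟩
  have hsolves := hstep n (b n) (b (n + 1))
  rwa [← hb n] at hsolves

end IsNearDiagonal

theorem exists_pos_mul_le (A : ℝ) {a c : ℝ} (ha : 0 < a) (hc : 0 < c) :
    ∃ x > 0, x ≤ a ∧ A * x ≤ c := by
  have hx : 0 < |A| + 1 := by positivity
  refine ⟨min a (c / (|A| + 1)), lt_min ha (by positivity), min_le_left _ _, ?_⟩
  calc A * min a (c / (|A| + 1)) ≤ (|A| + 1) * (c / (|A| + 1)) := by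
        gcongr
        · linarith [le_abs_self A]
        · exact min_le_right _ _
    _ = c := mul_div_cancel₀ c hx.ne'

theorem exists_conjugacy (h0 : ∀ j, lam j ≠ 0) (hr : 1 < r) (hlam : ‖lam‖ * r < 1) {ε : ℝ}
    (hε : 0 < ε) : ∃ η > 0, ∀ f : ℕ → (Fin k → ℂ) → Fin k → ℂ,
      (∀ n, IsNearDiagonal lam r η (f n)) →
      ∃ b : ℕ → CoeffSpace (Fin k), (∀ n, ‖b n‖ ≤ ε) ∧ ∀ n z, ‖z‖ ≤ 1 →
        z + partialSeries (subresonant lam)ᶜ (b n) z =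
          lam⁻¹ * (f n z + partialSeries (subresonant lam)ᶜ (b (n + 1)) (f n z)) +
            partialSeries (subresonant lam) (b n)
              (f n z + partialSeries (subresonant lam)ᶜ (b (n + 1)) (f n z)) := by
  have h1 : ‖lam‖ < 1 := (le_mul_of_one_le_right (norm_nonneg _) hr.le).trans_lt hlam
  obtain ⟨κ, hκ, hκ1⟩ := exists_between hlam
  obtain ⟨m, hm⟩ := exists_degree_le_of_mem_subresonant h0 h1
  obtain ⟨θ, hθ0, hθ1, hθ⟩ := exists_norm_multiPow_le_of_notMem_subresonant h0 h1
  obtain ⟨q, hθq, hq1⟩ := exists_between hθ1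
  obtain ⟨δ, hδ0, hδε, hδ⟩ := exists_pos_mul_le
    (2 * (‖lam⁻¹‖ * remainderConst lam κ m * geomConst k r)) (lt_min one_pos hε) (sub_pos.mpr hθq)
  obtain ⟨η, hη0, hηδ, hη⟩ := exists_pos_mul_le (‖lam⁻¹‖ * ‖lam⁻¹‖ * geomConst k r)
    (lt_min hδ0 (sub_pos.mpr hκ)) (mul_pos (sub_pos.mpr hq1) hδ0)
  refine ⟨η, hη0, fun f hf => ?_⟩
  have hδ1 : δ ≤ 1 := hδε.trans (min_le_left _ _)
  have hηκ : ‖lam‖ * r + η ≤ κ := by linarith [hηδ.trans (min_le_right _ _)]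
  have hq : θ + ‖lam⁻¹‖ * (remainderConst lam κ m * (η + δ)) * geomConst k r ≤ q := by
    have hconst : 0 ≤ ‖lam⁻¹‖ * remainderConst lam κ m * geomConst k r := mul_nonneg
      (mul_nonneg (norm_nonneg _) (remainderConst_nonneg lam hκ1 m))
      (geomConst_nonneg k (by positivity))
    linear_combination hδ + mul_le_mul_of_nonneg_left (hηδ.trans (min_le_left _ _)) hconst
  obtain ⟨b, hbδ, hb⟩ := IsNearDiagonal.exists_seq_solvesHomological hf h0 h1.le hθ0 hθ hm hr hηκ
    hκ1 hδ0.le hδ1 hq1 hq (by linear_combination hη)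
  exact ⟨b, fun n => (hbδ n).trans (hδε.trans (min_le_right _ _)), fun n z hz =>
    (hf n).add_partialSeries_eq h0 h1.le hm hr hηκ hκ1 ((hbδ (n + 1)).trans hδ1) (hb n) hz⟩

end ConjugacyEquation

/-! ### Holomorphic automorphisms -/

/-- A holomorphic automorphism of a complex normed space, bundled with its inverse. -/
structure HolAut (E : Type*) [NormedAddCommGroup E] [NormedSpace ℂ E] extends E ≃ E where
  differentiable_toFun : Differentiable ℂ toFun
  differentiable_invFun : Differentiable ℂ invFun

namespace HolAut

variable {E E' : Type*} [NormedAddCommGroup E] [NormedSpace ℂ E] [NormedAddCommGroup E']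
  [NormedSpace ℂ E']

instance : CoeFun (HolAut E) fun _ => E → E := ⟨fun f => f.toEquiv⟩

/-- The inverse automorphism. -/
def symm (f : HolAut E) : HolAut E where
  toEquiv := f.toEquiv.symm
  differentiable_toFun := f.differentiable_invFun
  differentiable_invFun := f.differentiable_toFun

/-- The identity automorphism. -/
def refl (E : Type*) [NormedAddCommGroup E] [NormedSpace ℂ E] : HolAut E where
  toEquiv := .refl E
  differentiable_toFun := differentiable_id
  differentiable_invFun := differentiable_id

/-- The composition `g ∘ f`. -/
def trans (f g : HolAut E) : HolAut E where
  toEquiv := f.toEquiv.trans g.toEquiv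
  differentiable_toFun := g.differentiable_toFun.comp f.differentiable_toFun
  differentiable_invFun := f.differentiable_invFun.comp g.differentiable_invFun

/-- The composition `D ∘ f ∘ D⁻¹` with a linear change of coordinates `D`. -/
def conj (D : E ≃L[ℂ] E') (f : HolAut E) : HolAut E' where
  toEquiv := (D.toEquiv.symm.trans f.toEquiv).trans D.toEquiv
  differentiable_toFun :=
    D.differentiable.comp (f.differentiable_toFun.comp D.symm.differentiable)
  differentiable_invFun :=
    D.differentiable.comp (f.differentiable_invFun.comp D.symm.differentiable)

/-- The automorphism underlying `seqComp`. -/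
def comp (f : ℕ → HolAut E) : ℕ → HolAut E
  | 0 => refl E
  | n + 1 => (comp f n).trans (f n)

theorem differentiable (f : HolAut E) : Differentiable ℂ f := f.differentiable_toFun

theorem apply_symm_apply (f : HolAut E) (x : E) : f (f.symm x) = x := f.toEquiv.apply_symm_apply x

theorem symm_apply_apply (f : HolAut E) (x : E) : f.symm (f x) = x := f.toEquiv.symm_apply_apply x

theorem injective (f : HolAut E) : Function.Injective f := f.toEquiv.injective

theorem comp_succ_apply (f : ℕ → HolAut E) (n : ℕ) (x : E) : comp f (n + 1) x = f n (comp f n x) :=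
  rfl

theorem coe_comp (f : ℕ → HolAut E) (n : ℕ) : ⇑(comp f n) = seqComp (fun n => f n) n := by
  induction n with
  | zero => rfl
  | succ n ih => rw [seqComp, ← ih]; rfl

theorem conj_apply (D : E ≃L[ℂ] E') (f : HolAut E) (x : E) : f.conj D (D x) = D (f x) :=
  congrArg (fun y => D (f y)) (D.symm_apply_apply x)

theorem comp_conj_apply (D : E ≃L[ℂ] E') (f : ℕ → HolAut E) (n : ℕ) (x : E) :
    comp (fun n => (f n).conj D) n (D x) = D (comp f n x) := by
  induction n with
  | zero => rfl
  | succ n ih => rw [comp_succ_apply, ih, conj_apply, comp_succ_apply]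

end HolAut

theorem IsAutomorphism.exists_holAut_eq {k : ℕ} {F : Ck k → Ck k} (hF : IsAutomorphism F) :
    ∃ f : HolAut (Ck k), ⇑f = F := by
  obtain ⟨hdiff, Finv, hdiff_inv, hleft, hright⟩ := hF
  exact ⟨⟨⟨F, Finv, hleft, hright⟩, hdiff, hdiff_inv⟩, rfl⟩

section SmallPerturbation

variable {E : Type*} [NormedAddCommGroup E] [NormedSpace ℂ E] {w : E → E} {R R' e : ℝ}

/-- The map `w` is holomorphic, `1 / 2`-Lipschitz and bounded by `e` on the ball of radius `R`
about `0`, so that `x ↦ x + w x` is a small perturbation of the identity there. -/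
structure IsSmallPerturbation (w : E → E) (R e : ℝ) : Prop where
  differentiableOn : DifferentiableOn ℂ w (ball 0 R)
  lipschitzOnWith : LipschitzOnWith (1 / 2) w (ball 0 R)
  norm_le : ∀ x ∈ ball (0 : E) R, ‖w x‖ ≤ e

namespace IsSmallPerturbation

theorem approximatesLinearOn (hw : IsSmallPerturbation w R e) :
    ApproximatesLinearOn (fun x => x + w x) (ContinuousLinearEquiv.refl ℂ E : E →L[ℂ] E)
      (ball 0 R) (1 / 2) := fun x hx y hy => by
  have hsub : x + w x - (y + w y) - (x - y) = w x - w y := by abel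
  calc ‖x + w x - (y + w y) - (x - y)‖ = ‖w x - w y‖ := by rw [hsub]
    _ ≤ _ := hw.lipschitzOnWith.norm_sub_le hx hy

theorem half_lt_inv_nnnorm_refl (E : Type*) [NormedAddCommGroup E] [NormedSpace ℂ E] :
    Subsingleton E ∨
      1 / 2 < ‖((ContinuousLinearEquiv.refl ℂ E).symm : E →L[ℂ] E)‖₊⁻¹ := by
  refine (subsingleton_or_nontrivial E).imp_right fun (_ : Nontrivial E) => ?_
  have hle : ‖((ContinuousLinearEquiv.refl ℂ E).symm : E →L[ℂ] E)‖₊ ≤ 1 :=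
    ContinuousLinearMap.norm_id_le
  have hpos : 0 < ‖((ContinuousLinearEquiv.refl ℂ E).symm : E →L[ℂ] E)‖₊ :=
    (ContinuousLinearEquiv.refl ℂ E).nnnorm_symm_pos
  exact (NNReal.half_lt_self one_ne_zero).trans_le ((one_le_inv₀ hpos).2 hle)

theorem injOn (hw : IsSmallPerturbation w R e) : Set.InjOn (fun x => x + w x) (ball 0 R) :=
  hw.approximatesLinearOn.injOn (half_lt_inv_nnnorm_refl E)

variable [CompleteSpace E]

theorem exists_add_eq (hw : IsSmallPerturbation w R e) (he : 0 ≤ e) (hR : R' + e ≤ R) {y : E}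
    (hy : y ∈ ball 0 R') : ∃ x ∈ ball (0 : E) R, ‖x‖ ≤ ‖y‖ + e ∧ x + w x = y := by
  have hsub : closedBall (0 : E) (‖y‖ + e) ⊆ ball 0 R :=
    closedBall_subset_ball (by linarith [mem_ball_zero_iff.mp hy])
  have hmaps : Set.MapsTo (fun x => y - w x) (closedBall 0 (‖y‖ + e)) (closedBall 0 (‖y‖ + e)) :=
    fun x hx => mem_closedBall_zero_iff.2 <|
      (norm_sub_le _ _).trans (add_le_add_right (hw.norm_le x (hsub hx)) _)
  have hcontr : ContractingWith (1 / 2) hmaps.restrict := by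
    refine ⟨NNReal.half_lt_self one_ne_zero, LipschitzWith.of_dist_le_mul fun a b => ?_⟩
    change dist (y - w a) (y - w b) ≤ _
    rw [dist_sub_left]
    exact hw.lipschitzOnWith.dist_le_mul _ (hsub a.2) _ (hsub b.2)
  obtain ⟨x, hx, hfixed, -⟩ := hcontr.exists_fixedPoint' isClosed_closedBall.isComplete hmaps
    (mem_closedBall_self (by positivity)) (edist_ne_top _ _)
  exact ⟨x, hsub hx, mem_closedBall_zero_iff.mp hx, (sub_eq_iff_eq_add.mp hfixed).symm⟩

theorem exists_hasFDerivAt_equiv (hw : IsSmallPerturbation w R e) {x : E} (hx : x ∈ ball 0 R) :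
    ∃ A : E ≃L[ℂ] E, HasFDerivAt (fun x => x + w x) (A : E →L[ℂ] E) x := by
  have hnhds := isOpen_ball.mem_nhds hx
  have hnorm : ‖-fderiv ℂ w x‖ < 1 := by
    rw [norm_neg]
    refine (norm_fderiv_le_of_lipschitzOn ℂ hnhds hw.lipschitzOnWith).trans_lt ?_
    norm_num
  let A : E ≃L[ℂ] E := .ofUnit (Units.oneSub (-fderiv ℂ w x) hnorm)
  have hA : (A : E →L[ℂ] E) = ContinuousLinearMap.id ℂ E + fderiv ℂ w x :=
    sub_neg_eq_add _ _
  exact ⟨A, hA ▸ (hasFDerivAt_id x).add (hw.differentiableOn.differentiableAt hnhds).hasFDerivAt⟩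

theorem exists_rightInverse (hw : IsSmallPerturbation w R e) (he : 0 ≤ e) (hR : R' + e ≤ R) :
    ∃ g : E → E, DifferentiableOn ℂ g (ball 0 R') ∧
      ∀ y ∈ ball (0 : E) R', ‖g y‖ ≤ ‖y‖ + e ∧ g y + w (g y) = y := by
  let φ := hw.approximatesLinearOn.toOpenPartialHomeomorph _ (ball 0 R)
    (half_lt_inv_nnnorm_refl E) isOpen_ball
  have hφ : ∀ y ∈ ball (0 : E) R', y ∈ φ.target ∧ ‖φ.symm y‖ ≤ ‖y‖ + e := fun y hy => by
    obtain ⟨x, hx, hxy, hadd⟩ := hw.exists_add_eq he hR hy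
    have hsymm : φ.symm y = x := by
      rw [← hadd]
      exact φ.left_inv hx
    exact ⟨⟨x, hx, hadd⟩, hsymm ▸ hxy⟩
  refine ⟨φ.symm, fun y hy => ?_, fun y hy => ⟨(hφ y hy).2, φ.right_inv (hφ y hy).1⟩⟩
  obtain ⟨A, hA⟩ := hw.exists_hasFDerivAt_equiv (φ.map_target (hφ y hy).1)
  exact (φ.hasFDerivAt_symm (hφ y hy).1 hA).differentiableAt.differentiableWithinAt

end IsSmallPerturbation

variable {t : E → E} {L : E ≃L[ℂ] E} {D : ℕ → E ≃L[ℂ] E} {v : ℕ → E → E}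

/-- In each of the linear coordinates `D n`, which together shrink every point to `0`, the map
`L ∘ t` is a small perturbation `x ↦ x + v n x` of the identity on the ball of radius `R`. -/
structure IsRescaledPerturbation (t : E → E) (L : E ≃L[ℂ] E) (D : ℕ → E ≃L[ℂ] E)
    (v : ℕ → E → E) (R e : ℝ) : Prop where
  differentiable : Differentiable ℂ t
  tendsto_zero : ∀ x, Tendsto (fun n => D n x) atTop (𝓝 0)
  isSmallPerturbation : ∀ n, IsSmallPerturbation (v n) R e
  conj_eq : ∀ n x, L (D n (t x)) = D n x + v n (D n x)

namespace IsRescaledPerturbation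

theorem injective (ht : IsRescaledPerturbation t L D v R e) (hR : 0 < R) :
    Function.Injective t := fun x y hxy => by
  obtain ⟨n, hx, hy⟩ := (((ht.tendsto_zero x).eventually_mem (ball_mem_nhds 0 hR)).and
    ((ht.tendsto_zero y).eventually_mem (ball_mem_nhds 0 hR))).exists
  refine (D n).injective ((ht.isSmallPerturbation n).injOn hx hy ?_)
  change D n x + v n (D n x) = D n y + v n (D n y)
  rw [← ht.conj_eq, ← ht.conj_eq, hxy]

variable [CompleteSpace E]

theorem exists_rightInverse (ht : IsRescaledPerturbation t L D v R e) (he : 0 ≤ e)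
    (hR : R' + e ≤ R) (n : ℕ) :
    ∃ g : E → E, DifferentiableOn ℂ g {x | ‖L (D n x)‖ < R'} ∧
      ∀ x, ‖L (D n x)‖ < R' → ‖D n (g x)‖ ≤ ‖L (D n x)‖ + e ∧ t (g x) = x := by
  obtain ⟨g, hgdiff, hg⟩ := (ht.isSmallPerturbation n).exists_rightInverse he hR
  refine ⟨fun x => (D n).symm (g (L (D n x))), ?_, fun x hx => ?_⟩
  · exact (D n).symm.differentiable.comp_differentiableOn
      (hgdiff.comp (L.differentiable.comp (D n).differentiable).differentiableOn
        fun x hx => mem_ball_zero_iff.2 hx)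
  · obtain ⟨hnorm, hadd⟩ := hg _ (mem_ball_zero_iff.2 hx)
    refine ⟨by rwa [(D n).apply_symm_apply], (D n).injective (L.injective ?_)⟩
    rw [ht.conj_eq, (D n).apply_symm_apply, hadd]

theorem exists_holAut_symm_eq (ht : IsRescaledPerturbation t L D v R e) (he : 0 ≤ e)
    (hR' : 0 < R') (hR : R' + e ≤ R) :
    ∃ τ : HolAut E, ⇑τ.symm = t ∧
      ∀ n x, ‖L (D n x)‖ < R' → ‖D n (τ x)‖ ≤ ‖L (D n x)‖ + e := by
  choose g hgdiff hg using ht.exists_rightInverse he hR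
  have hopen n : IsOpen {x | ‖L (D n x)‖ < R'} :=
    isOpen_lt (L.continuous.comp (D n).continuous).norm continuous_const
  have hsmall x : ∃ n, ‖L (D n x)‖ < R' := by
    have hlim := ((L.continuous.tendsto 0).comp (ht.tendsto_zero x)).norm
    rw [map_zero, norm_zero] at hlim
    exact (hlim.eventually_lt_const hR').exists
  have hinj := ht.injective (by linarith)
  let ψ := Equiv.ofBijective t ⟨hinj, fun x => (hsmall x).elim fun n hn => ⟨_, (hg n x hn).2⟩⟩
  have hψ n x (hx : ‖L (D n x)‖ < R') : ψ.symm x = g n x :=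
    ψ.symm_apply_eq.2 (hg n x hx).2.symm
  have hdiff : Differentiable ℂ ψ.symm := fun x => by
    obtain ⟨n, hn⟩ := hsmall x
    have hnhds := (hopen n).mem_nhds hn
    exact ((hgdiff n).differentiableAt hnhds).congr_of_eventuallyEq
      (eventually_of_mem hnhds (hψ n))
  refine ⟨⟨ψ.symm, hdiff, ht.differentiable⟩, rfl, fun n x hx => ?_⟩
  change ‖D n (ψ.symm x)‖ ≤ _
  rw [hψ n x hx]
  exact (hg n x hx).1

end IsRescaledPerturbation

end SmallPerturbation

/-! ### The model automorphisms -/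

section Model

variable {ι : Type*} {lam μ : ι → ℂ}

/-- The diagonal automorphism `x ↦ lam * x` of `ℂ^ι`. -/
def diagEquiv (lam : ι → ℂ) (h0 : ∀ j, lam j ≠ 0) : (ι → ℂ) ≃L[ℂ] (ι → ℂ) :=
  ContinuousLinearEquiv.piCongrRight fun j =>
    ContinuousLinearEquiv.unitsEquivAut ℂ (Units.mk0 (lam j) (h0 j))

theorem diagEquiv_apply (h0 : ∀ j, lam j ≠ 0) (x : ι → ℂ) : diagEquiv lam h0 x = lam * x :=
  mul_comm x lam

variable [Fintype ι]

theorem subresonant_subset_smul {r : ℝ} (hr : 1 ≤ r) (hlam : ‖lam‖ * r ≤ 1) :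
    subresonant lam ⊆ subresonant (r • lam) := by
  intro p (hp : ‖lam p.2‖ ≤ ‖multiPow p.1 lam‖)
  have hr0 : 0 ≤ r := zero_le_one.trans hr
  have hmul : ‖multiPow p.1 (r • lam)‖ = r ^ (∑ i, p.1 i) * ‖multiPow p.1 lam‖ := by
    have hsmul : r • lam = (fun _ => (r : ℂ)) * lam := rfl
    rw [hsmul, multiPow_mul, multiPow_const, norm_mul, norm_pow, Complex.norm_of_nonneg hr0]
  change ‖r • lam p.2‖ ≤ ‖multiPow p.1 (r • lam)‖
  rw [hmul, norm_smul, Real.norm_of_nonneg hr0]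
  rcases Nat.eq_zero_or_pos (∑ i, p.1 i) with hdeg | hdeg
  · have hzero : p.1 = 0 := funext fun i => Finset.sum_eq_zero_iff.1 hdeg i (Finset.mem_univ i)
    rw [hdeg, pow_zero, one_mul, hzero, multiPow_zero_left, norm_one, mul_comm]
    exact (mul_le_mul_of_nonneg_right (norm_le_pi_norm lam p.2) hr0).trans hlam
  · exact mul_le_mul (le_self_pow₀ hr hdeg.ne') hp (norm_nonneg _) (by positivity)

theorem subresonant_subset_pow (μ : ι → ℂ) (n : ℕ) : subresonant μ ⊆ subresonant (μ ^ n) := by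
  intro p (hp : ‖μ p.2‖ ≤ ‖multiPow p.1 μ‖)
  have hpow : multiPow p.1 (μ ^ n) = multiPow p.1 μ ^ n := by
    simp only [multiPow, Pi.pow_apply, ← Finset.prod_pow, pow_right_comm]
  change ‖μ p.2 ^ n‖ ≤ ‖multiPow p.1 (μ ^ n)‖
  rw [hpow, norm_pow, norm_pow]
  exact pow_le_pow_left₀ (norm_nonneg _) hp n

theorem exists_mul_partialSeries_eq {T : Set ((ι → ℕ) × ι)} (hμ : ∀ j, μ j ≠ 0)
    (hT : T ⊆ subresonant μ) (b : CoeffSpace ι) :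
    ∃ b' : CoeffSpace ι, ‖b'‖ ≤ ‖b‖ ∧
      ∀ x, μ * partialSeries T b x = partialSeries T b' (μ * x) := by
  let c (p : (ι → ℕ) × ι) : ℂ := T.indicator b p * (μ p.2 / multiPow p.1 μ)
  have hc p : ‖c p‖ ≤ ‖b p‖ := by
    by_cases hp : p ∈ T
    · simp only [c, Set.indicator_of_mem hp, norm_mul, norm_div]
      exact mul_le_of_le_one_right (norm_nonneg _) (div_le_one_of_le₀ (hT hp) (norm_nonneg _))
    · simp [c, Set.indicator_of_notMem hp]
  obtain ⟨b', hb'⟩ := exists_lp_one_eq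
    (Summable.of_nonneg_of_le (fun _ => norm_nonneg _) hc (hasSum_norm_lp_one b).summable)
  refine ⟨b', norm_lp_one_le (hasSum_norm_lp_one b) (hb' ▸ hc), fun x => funext fun j => ?_⟩
  simp only [partialSeries, Pi.mul_apply]
  rw [← tsum_mul_left]
  refine tsum_congr fun α => ?_
  have hne := multiPow_ne_zero hμ α
  by_cases hp : (α, j) ∈ T
  · simp only [hb', c, Set.indicator_of_mem hp, multiPow_mul]
    field_simp
  · simp only [Set.indicator_of_notMem hp, zero_mul, mul_zero]

theorem tendsto_pow_mul_atTop_nhds_zero (hμ : ‖μ‖ < 1) (x : ι → ℂ) :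
    Tendsto (fun n : ℕ => μ ^ n * x) atTop (𝓝 0) := by
  simpa using (tendsto_pow_atTop_nhds_zero_of_norm_lt_one hμ).mul_const x

/-- The polynomial map inverse to the model dynamics: the linear map `lam⁻¹` perturbed by the
subresonant terms with coefficients `b`. -/
def modelMap (lam : ι → ℂ) (b : CoeffSpace ι) (x : ι → ℂ) : ι → ℂ :=
  lam⁻¹ * x + partialSeries (subresonant lam) b x

variable {m : ℕ} {δ r : ℝ} {b : CoeffSpace ι}

theorem differentiable_modelMap (hm : ∀ p ∈ subresonant lam, ∑ i, p.1 i ≤ m)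
    (b : CoeffSpace ι) : Differentiable ℂ (modelMap lam b) := fun x => by
  have hR : 1 ≤ ‖x‖ + 1 := le_add_of_nonneg_left (norm_nonneg x)
  have hseries := (differentiableOn_partialSeries (pow_degree_le_pow hm hR) (by positivity)
    b).differentiableAt (isOpen_ball.mem_nhds (mem_ball_zero_iff.2 (lt_add_one ‖x‖)))
  exact (differentiableAt_id.const_mul lam⁻¹).add hseries

theorem isSmallPerturbation_mul_partialSeries (h1 : ‖lam‖ ≤ 1)
    (hm : ∀ p ∈ subresonant lam, ∑ i, p.1 i ≤ m) (hδ : 2 * (2 ^ m * δ) ≤ 1 / 2) (hb : ‖b‖ ≤ δ) :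
    IsSmallPerturbation (fun x => lam * partialSeries (subresonant lam) b x) 1 δ where
  differentiableOn :=
    (differentiableOn_partialSeries (pow_degree_le_pow hm le_rfl) (by positivity) b).const_mul lam
  lipschitzOnWith := LipschitzOnWith.of_dist_le_mul fun x hx y hy => by
    have hsub := norm_partialSeries_sub_le (pow_degree_le_pow hm one_le_two) (by positivity) b
      one_lt_two (mem_ball_zero_iff.1 hx).le (mem_ball_zero_iff.1 hy).le
    rw [dist_eq_norm, dist_eq_norm, ← mul_sub]
    calc ‖lam * (partialSeries (subresonant lam) b x - partialSeries (subresonant lam) b y)‖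
      _ ≤ ‖lam‖ * ‖partialSeries (subresonant lam) b x - partialSeries (subresonant lam) b y‖ :=
          norm_mul_le _ _
      _ ≤ 1 * (2 * (2 ^ m * ‖b‖) / (2 - 1) * ‖x - y‖) := by gcongr
      _ = 2 * (2 ^ m * ‖b‖) * ‖x - y‖ := by ring
      _ ≤ 2 * (2 ^ m * δ) * ‖x - y‖ := by gcongr
      _ ≤ _ := mul_le_mul_of_nonneg_right hδ (norm_nonneg _)
  norm_le x hx := by
    have hle := norm_partialSeries_le (pow_degree_le_pow hm le_rfl) (by positivity) b
      (mem_ball_zero_iff.1 hx).le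
    rw [one_pow, one_mul] at hle
    calc ‖lam * partialSeries (subresonant lam) b x‖
      _ ≤ ‖lam‖ * ‖partialSeries (subresonant lam) b x‖ := norm_mul_le _ _
      _ ≤ 1 * δ := mul_le_mul h1 (hle.trans hb) (norm_nonneg _) zero_le_one
      _ = δ := one_mul δ

theorem exists_isRescaledPerturbation_modelMap (h0 : ∀ j, lam j ≠ 0) (h1 : ‖lam‖ ≤ 1)
    (hμ0 : ∀ j, μ j ≠ 0) (hμ1 : ‖μ‖ < 1) (hsub : subresonant lam ⊆ subresonant μ)
    (hm : ∀ p ∈ subresonant lam, ∑ i, p.1 i ≤ m) (hδ : 2 * (2 ^ m * δ) ≤ 1 / 2) (hb : ‖b‖ ≤ δ) :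
    ∃ v : ℕ → (ι → ℂ) → ι → ℂ, IsRescaledPerturbation (modelMap lam b) (diagEquiv lam h0)
      (fun n => diagEquiv (μ ^ n) fun j => pow_ne_zero n (hμ0 j)) v 1 δ := by
  choose b' hb' hconj using fun n => exists_mul_partialSeries_eq (μ := μ ^ n)
    (fun j => pow_ne_zero n (hμ0 j)) (hsub.trans (subresonant_subset_pow μ n)) b
  refine ⟨fun n x => lam * partialSeries (subresonant lam) (b' n) x,
    differentiable_modelMap hm b, fun x => ?_, fun n => ?_, fun n x => ?_⟩
  · simpa only [diagEquiv_apply] using tendsto_pow_mul_atTop_nhds_zero hμ1 x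
  · exact isSmallPerturbation_mul_partialSeries h1 hm hδ ((hb' n).trans hb)
  · have hcancel : lam * (lam⁻¹ * x) = x := funext fun j => mul_inv_cancel_left₀ (h0 j) _
    simp only [diagEquiv_apply, modelMap]
    calc lam * (μ ^ n * (lam⁻¹ * x + partialSeries (subresonant lam) b x))
      _ = μ ^ n * (lam * (lam⁻¹ * x)) + lam * (μ ^ n * partialSeries (subresonant lam) b x) := by
          ring
      _ = _ := by rw [hcancel, hconj]

theorem exists_holAut_symm_eq_modelMap (h0 : ∀ j, lam j ≠ 0) (hr : 1 < r) (hlam : ‖lam‖ * r < 1)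
    (hm : ∀ p ∈ subresonant lam, ∑ i, p.1 i ≤ m) (hδ : 2 * (2 ^ m * δ) ≤ 1 / 2)
    (hrδ : 1 / 2 / r + δ ≤ 1 / 2) (hb : ‖b‖ ≤ δ) :
    ∃ τ : HolAut (ι → ℂ), ⇑τ.symm = modelMap lam b ∧
      ∀ n x, ‖(r • lam) ^ (n + 1) * x‖ < 1 / 2 → ‖(r • lam) ^ n * τ x‖ < 1 / 2 := by
  have hr0 : 0 < r := zero_lt_one.trans hr
  have h1 : ‖lam‖ ≤ 1 := (le_mul_of_one_le_right (norm_nonneg _) hr.le).trans hlam.le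
  have hμ1 : ‖r • lam‖ < 1 := by rwa [norm_smul, Real.norm_of_nonneg hr0.le, mul_comm]
  obtain ⟨v, hv⟩ := exists_isRescaledPerturbation_modelMap (μ := r • lam) h0 h1
    (fun j => smul_ne_zero hr0.ne' (h0 j)) hμ1 (subresonant_subset_smul hr.le hlam.le) hm hδ hb
  obtain ⟨τ, hτ, hbound⟩ := hv.exists_holAut_symm_eq (R' := 1 / 2) ((norm_nonneg b).trans hb)
    one_half_pos (by linarith [show 0 < 1 / 2 / r by positivity])
  refine ⟨τ, hτ, fun n x hx => ?_⟩
  have hnorm : ‖lam * ((r • lam) ^ n * x)‖ < 1 / 2 / r := by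
    rw [pow_succ', smul_mul_assoc, smul_mul_assoc, norm_smul, Real.norm_of_nonneg hr0.le,
      mul_assoc] at hx
    rwa [lt_div_iff₀' hr0]
  simp only [diagEquiv_apply] at hbound
  have hδ0 := (norm_nonneg b).trans hb
  linarith [hbound n x (by linarith)]

end Model

/-! ### Basins of conjugate sequences -/

section Basin

variable {E : Type*} [NormedAddCommGroup E] [NormedSpace ℂ E]

/-- The set `Ω ⊆ E` is biholomorphic to the whole space `E`; on `ℂ^k` this is `BiholoToC`. -/
def BiholomorphicToUniv (Ω : Set E) : Prop :=
  ∃ Ψ Φ : E → E, DifferentiableOn ℂ Ψ Ω ∧ Differentiable ℂ Φ ∧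
    (∀ w, Φ w ∈ Ω) ∧ (∀ z ∈ Ω, Φ (Ψ z) = z) ∧ ∀ w, Ψ (Φ w) = w

/-- The basin of attraction of the sequence `f` with respect to the trapping region `N`. -/
def basin {α : Type*} (f : ℕ → α → α) (N : Set α) : Set α := ⋃ n : ℕ, seqComp f (n + 1) ⁻¹' N

theorem exists_eqOn_iUnion {X Y : Type*} {U : ℕ → Set X} {P : ℕ → X → Y}
    (hcompat : ∀ n m, n ≤ m → Set.EqOn (P m) (P n) (U n)) :
    ∃ Ψ : X → Y, ∀ n, Set.EqOn Ψ (P n) (U n) := by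
  have hex (z : X) : ∃ y, ∀ n, z ∈ U n → P n z = y := by
    by_cases hz : ∃ n, z ∈ U n
    · obtain ⟨n, hn⟩ := hz
      refine ⟨P n z, fun m hm => ?_⟩
      rcases le_total n m with hnm | hmn
      · exact hcompat n m hnm hn
      · exact (hcompat m n hmn hm).symm
    · exact ⟨P 0 z, fun n hn => absurd ⟨n, hn⟩ hz⟩
  choose Ψ hΨ using hex
  exact ⟨Ψ, fun n z hz => (hΨ z n hz).symm⟩

theorem biholomorphicToUniv_iUnion {U W : ℕ → Set E} {P Q : ℕ → E → E} (hUmono : Monotone U)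
    (hU : ∀ n, IsOpen (U n)) (hPdiff : ∀ n, DifferentiableOn ℂ (P n) (U n))
    (hPinj : ∀ n, Set.InjOn (P n) (U n)) (hPP : ∀ n m, n ≤ m → Set.EqOn (P m) (P n) (U n))
    (hW : ∀ n, IsOpen (W n)) (hQdiff : ∀ n, DifferentiableOn ℂ (Q n) (W n))
    (hQU : ∀ n, Set.MapsTo (Q n) (W n) (U n)) (hPQ : ∀ n, ∀ w ∈ W n, P n (Q n w) = w)
    (hcover : ∀ w, ∃ n, w ∈ W n) : BiholomorphicToUniv (⋃ n, U n) := by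
  obtain ⟨Ψ, hΨ⟩ := exists_eqOn_iUnion hPP
  have hΨinj : Set.InjOn Ψ (⋃ n, U n) :=
    Set.inj_on_iUnion_of_directed hUmono.directed_le fun n => (hPinj n).congr (hΨ n).symm
  choose ω hω using hcover
  have hΦU n w (hw : w ∈ W n) : Q n w ∈ ⋃ n, U n := Set.mem_iUnion_of_mem n (hQU n hw)
  have hΨQ n w (hw : w ∈ W n) : Ψ (Q n w) = w := (hΨ n (hQU n hw)).trans (hPQ n w hw)
  have hΦQ n : Set.EqOn (fun w => Q (ω w) w) (Q n) (W n) := fun w hw =>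
    hΨinj (hΦU _ w (hω w)) (hΦU n w hw) ((hΨQ _ w (hω w)).trans (hΨQ n w hw).symm)
  refine ⟨Ψ, fun w => Q (ω w) w, fun z hz => ?_, fun w => ?_, fun w => hΦU _ w (hω w),
    fun z hz => hΨinj (hΦU _ _ (hω _)) hz (hΨQ _ _ (hω _)), fun w => hΨQ _ w (hω w)⟩
  · obtain ⟨n, hn⟩ := Set.mem_iUnion.1 hz
    have hnhds := (hU n).mem_nhds hn
    exact (((hPdiff n).differentiableAt hnhds).congr_of_eventuallyEq
      (eventually_of_mem hnhds (hΨ n))).differentiableWithinAt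
  · have hnhds := (hW _).mem_nhds (hω w)
    exact ((hQdiff _).differentiableAt hnhds).congr_of_eventuallyEq
      (eventually_of_mem hnhds (hΦQ _))

/-- Local holomorphic coordinates `h n` on the trapping region `N` conjugate the sequence `f` to
the sequence `τ`, and the inverses `g n` of these coordinates are defined on `V`. -/
structure IsLocalConjugacy (f τ : ℕ → HolAut E) (h g : ℕ → E → E) (N V : Set E) : Prop where
  isOpen_source : IsOpen N
  isOpen_target : IsOpen V
  mapsTo : ∀ n, Set.MapsTo (f n) N N
  conj_eq : ∀ n, ∀ z ∈ N, h (n + 1) (f n z) = τ n (h n z)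
  differentiableOn : ∀ n, DifferentiableOn ℂ (h n) N
  injOn : ∀ n, Set.InjOn (h n) N
  differentiableOn_inv : ∀ n, DifferentiableOn ℂ (g n) V
  mapsTo_inv : ∀ n, Set.MapsTo (g n) V N
  right_inv : ∀ n, ∀ w ∈ V, h n (g n w) = w

namespace IsLocalConjugacy

variable {f τ : ℕ → HolAut E} {h g : ℕ → E → E} {N V : Set E}

open HolAut

theorem monotone_preimage (hf : IsLocalConjugacy f τ h g N V) :
    Monotone fun n => comp f n ⁻¹' N :=
  monotone_nat_of_le_succ fun n _ hz => hf.mapsTo n hz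

theorem pullback_eq_of_le (hf : IsLocalConjugacy f τ h g N V) {n m : ℕ} (hnm : n ≤ m) :
    Set.EqOn (fun z => (comp τ m).symm (h m (comp f m z)))
      (fun z => (comp τ n).symm (h n (comp f n z))) (comp f n ⁻¹' N) := by
  intro z hz
  induction m, hnm using Nat.le_induction with
  | base => rfl
  | succ m hnm ih =>
    refine Eq.trans ?_ ih
    apply (comp τ (m + 1)).injective
    simp only [apply_symm_apply, comp_succ_apply]
    exact hf.conj_eq m _ (hf.monotone_preimage hnm hz)

theorem biholomorphicToUniv_basin (hf : IsLocalConjugacy f τ h g N V)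
    (hattract : ∀ w, ∃ n, comp τ (n + 1) w ∈ V) :
    BiholomorphicToUniv (basin (fun n => f n) N) := by
  simp only [basin, ← coe_comp]
  refine biholomorphicToUniv_iUnion (U := fun n => comp f (n + 1) ⁻¹' N)
    (W := fun n => comp τ (n + 1) ⁻¹' V)
    (P := fun n z => (comp τ (n + 1)).symm (h (n + 1) (comp f (n + 1) z)))
    (Q := fun n w => (comp f (n + 1)).symm (g (n + 1) (comp τ (n + 1) w)))
    (fun n m hnm => hf.monotone_preimage (Nat.succ_le_succ hnm))
    (fun n => hf.isOpen_source.preimage (comp f (n + 1)).differentiable.continuous)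
    (fun n => ?_) (fun n z hz z' hz' hzz' => ?_)
    (fun n m hnm => hf.pullback_eq_of_le (Nat.succ_le_succ hnm))
    (fun n => hf.isOpen_target.preimage (comp τ (n + 1)).differentiable.continuous)
    (fun n => ?_) (fun n w hw => ?_) (fun n w hw => ?_) hattract
  · exact (comp τ (n + 1)).symm.differentiable.comp_differentiableOn
      ((hf.differentiableOn (n + 1)).comp (comp f (n + 1)).differentiable.differentiableOn
        (Set.mapsTo_preimage _ _))
  · exact (comp f (n + 1)).injective (hf.injOn (n + 1) hz hz'
      ((comp τ (n + 1)).symm.injective hzz'))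
  · exact (comp f (n + 1)).symm.differentiable.comp_differentiableOn
      ((hf.differentiableOn_inv (n + 1)).comp (comp τ (n + 1)).differentiable.differentiableOn
        (Set.mapsTo_preimage _ _))
  · rw [Set.mem_preimage, apply_symm_apply]
    exact hf.mapsTo_inv (n + 1) hw
  · rw [apply_symm_apply, hf.right_inv (n + 1) _ hw, symm_apply_apply]

end IsLocalConjugacy

end Basin

/-! ### Sequences close to a diagonal map -/

section NearDiagonal

variable {ι : Type*} [Fintype ι] {T : Set ((ι → ℕ) × ι)} {lam μ : ι → ℂ} {R ρ δ r c : ℝ}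

theorem isSmallPerturbation_partialSeries {b : CoeffSpace ι} (hρ : ρ < 1)
    (hδ : 2 * δ / (1 - ρ) ≤ 1 / 2) (hb : ‖b‖ ≤ δ) :
    IsSmallPerturbation (partialSeries T b) ρ δ where
  differentiableOn :=
    (differentiableOn_partialSeries (fun _ _ => (one_pow _).le) zero_le_one b).mono
      (ball_subset_ball hρ.le)
  lipschitzOnWith := LipschitzOnWith.of_dist_le_mul fun x hx y hy => by
    have : 0 < 1 - ρ := sub_pos.2 hρ
    rw [dist_eq_norm, dist_eq_norm]
    calc ‖partialSeries T b x - partialSeries T b y‖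
      _ ≤ 2 * (1 * ‖b‖) / (1 - ρ) * ‖x - y‖ :=
          norm_partialSeries_sub_le (fun _ _ => (one_pow _).le) zero_le_one b hρ
            (mem_ball_zero_iff.1 hx).le (mem_ball_zero_iff.1 hy).le
      _ ≤ 2 * δ / (1 - ρ) * ‖x - y‖ := by rw [one_mul]; gcongr
      _ ≤ _ := mul_le_mul_of_nonneg_right hδ (norm_nonneg _)
  norm_le x hx := by
    have hle := norm_partialSeries_le (fun _ _ => (one_pow _).le) zero_le_one b
      ((mem_ball_zero_iff.1 hx).le.trans hρ.le) (T := T)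
    rw [one_mul] at hle
    exact hle.trans hb

theorem exists_comp_mem_ball {τ : ℕ → HolAut (ι → ℂ)} (hμ : ‖μ‖ < 1) (hc : 0 < c)
    (hτ : ∀ n i x, ‖μ ^ (i + 1) * x‖ < c → ‖μ ^ i * τ n x‖ < c) (w : ι → ℂ) :
    ∃ n, HolAut.comp τ (n + 1) w ∈ ball 0 c := by
  have hcomp : ∀ n i, ‖μ ^ (i + n) * w‖ < c → ‖μ ^ i * HolAut.comp τ n w‖ < c := by
    intro n
    induction n with
    | zero => exact fun i hi => hi
    | succ n ih => exact fun i hi => hτ n i _ (ih (i + 1) (by rwa [add_assoc, add_comm 1 n]))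
  have hlim := (tendsto_pow_mul_atTop_nhds_zero hμ w).comp (tendsto_add_atTop_nat 1)
  obtain ⟨n, hn⟩ := (hlim.eventually_mem (ball_mem_nhds 0 hc)).exists
  refine ⟨n, mem_ball_zero_iff.2 ?_⟩
  simpa using hcomp (n + 1) 0 (by simpa using hn)

theorem exists_isLocalConjugacy {E : Type*} [NormedAddCommGroup E] [NormedSpace ℂ E]
    [CompleteSpace E] {f τ : ℕ → HolAut E} {u : ℕ → E → E}
    (hu : ∀ n, IsSmallPerturbation (u n) ρ δ) (hδ : 0 ≤ δ) (hR : R + δ ≤ ρ)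
    (hf : ∀ n, Set.MapsTo (f n) (ball 0 ρ) (ball 0 ρ))
    (hconj : ∀ n, ∀ z ∈ ball 0 ρ, (τ n).symm (f n z + u (n + 1) (f n z)) = z + u n z) :
    ∃ g, IsLocalConjugacy f τ (fun n z => z + u n z) g (ball 0 ρ) (ball 0 R) := by
  choose g hgdiff hg using fun n => (hu n).exists_rightInverse hδ hR
  refine ⟨g, isOpen_ball, isOpen_ball, hf, fun n z hz => ?_,
    fun n => differentiableOn_id.add (hu n).differentiableOn, fun n => (hu n).injOn, hgdiff,
    fun n w hw => ?_, fun n w hw => (hg n w hw).2⟩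
  · rw [← hconj n z hz, HolAut.apply_symm_apply]
  · rw [mem_ball_zero_iff] at hw ⊢
    linarith [(hg n w (mem_ball_zero_iff.2 hw)).1]

theorem biholomorphicToUniv_basin_of_conj_modelMap {m : ℕ} {f : ℕ → HolAut (ι → ℂ)}
    {b : ℕ → CoeffSpace ι} (h0 : ∀ j, lam j ≠ 0) (hr : 1 < r) (hlam : ‖lam‖ * r < 1)
    (hm : ∀ p ∈ subresonant lam, ∑ i, p.1 i ≤ m) (hδm : 2 * (2 ^ m * δ) ≤ 1 / 2)
    (hrδ : 1 / 2 / r + δ ≤ 1 / 2) (hρ : ρ < 1) (hδρ : 2 * δ / (1 - ρ) ≤ 1 / 2)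
    (hρδ : 1 / 2 + δ ≤ ρ) (hb : ∀ n, ‖b n‖ ≤ δ)
    (hf : ∀ n, Set.MapsTo (f n) (ball 0 ρ) (ball 0 ρ))
    (hconj : ∀ n, ∀ z ∈ ball 0 ρ, z + partialSeries T (b n) z =
      modelMap lam (b n) (f n z + partialSeries T (b (n + 1)) (f n z))) :
    BiholomorphicToUniv (basin (fun n => f n) (ball 0 ρ)) := by
  choose τ hτ hτ_shrink using
    fun n => exists_holAut_symm_eq_modelMap h0 hr hlam hm hδm hrδ (hb n)
  obtain ⟨g, hg⟩ := exists_isLocalConjugacy (τ := τ) (u := fun n => partialSeries T (b n))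
    (fun n => isSmallPerturbation_partialSeries hρ hδρ (hb n)) ((norm_nonneg _).trans (hb 0)) hρδ
    hf fun n z hz => by rw [hτ n, hconj n z hz]
  have hμ : ‖r • lam‖ < 1 := by
    rwa [norm_smul, Real.norm_of_nonneg (zero_le_one.trans hr.le), mul_comm]
  exact hg.biholomorphicToUniv_basin (exists_comp_mem_ball hμ one_half_pos hτ_shrink)

theorem exists_isNearDiagonal_imp_biholomorphicToUniv_basin {k : ℕ} {lam : Fin k → ℂ}
    (h0 : ∀ j, lam j ≠ 0) (h1 : ‖lam‖ < 1) :
    ∃ r > 0, ∃ η > 0, ∃ ρ > 0, ∃ κ < ρ, ∀ f : ℕ → HolAut (Fin k → ℂ),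
      (∀ n, IsNearDiagonal lam r η (f n)) →
      (∀ n, Set.MapsTo (f n) (ball 0 ρ) (closedBall 0 κ)) ∧
      BiholomorphicToUniv (basin (fun n => f n) (ball 0 ρ)) := by
  obtain ⟨r, hr, hlam⟩ : ∃ r > 1, ‖lam‖ * r < 1 :=
    ⟨2 / (1 + ‖lam‖), by rw [gt_iff_lt, lt_div_iff₀ (by positivity)]; linarith,
      by rw [mul_div_assoc', div_lt_one (by positivity)]; linarith⟩
  obtain ⟨κ, hκ, hκ1⟩ := exists_between (max_lt hlam one_half_lt_one)
  obtain ⟨ρ, hκρ, hρ1⟩ := exists_between hκ1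
  rw [max_lt_iff] at hκ
  have : 0 < 1 - ρ := sub_pos.2 hρ1
  obtain ⟨m, hm⟩ := exists_degree_le_of_mem_subresonant h0 h1
  have hr_half : 1 / 2 / r < 1 / 2 := div_lt_self one_half_pos hr
  obtain ⟨δ, hδ0, hδ, hδ_mul⟩ := exists_pos_mul_le (2 * 2 ^ m + 2 / (1 - ρ))
    (lt_min (sub_pos.2 hr_half) (sub_pos.2 (hκ.2.trans hκρ))) one_half_pos
  rw [le_min_iff] at hδ
  have hδm : 0 ≤ 2 * 2 ^ m * δ := by positivity
  have hδρ : 0 ≤ 2 * δ / (1 - ρ) := by positivity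
  have hδ_sum : 2 * 2 ^ m * δ + 2 * δ / (1 - ρ) ≤ 1 / 2 := by
    rwa [add_mul, div_mul_eq_mul_div] at hδ_mul
  obtain ⟨η, hη, hconj⟩ := exists_conjugacy h0 hr hlam hδ0
  have hrpos : 0 < r := zero_lt_one.trans hr
  refine ⟨r, hrpos, min η (κ - ‖lam‖ * r), lt_min hη (sub_pos.2 hκ.1), ρ, by linarith, κ, hκρ,
    fun f hf => ?_⟩
  have hmaps n : Set.MapsTo (f n) (ball 0 ρ) (closedBall 0 κ) := fun z hz =>
    mem_closedBall_zero_iff.2 <| (hf n).norm_apply_le_of_mem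
      (by linarith [min_le_right η (κ - ‖lam‖ * r)])
      (ball_subset_closedBall.trans (closedBall_subset_closedBall (hρ1.trans hr).le) hz)
  obtain ⟨b, hb, hb_conj⟩ := hconj (fun n => f n) fun n =>
    ⟨(hf n).differentiableOn, fun z hz => ((hf n).norm_sub_le z hz).trans (min_le_left _ _)⟩
  exact ⟨hmaps, biholomorphicToUniv_basin_of_conj_modelMap h0 hr hlam hm (by linarith)
    (by linarith) hρ1 (by linarith) (by linarith) hb
    (fun n => (hmaps n).mono_right (closedBall_subset_ball hκρ))
    fun n z hz => hb_conj n z ((mem_ball_zero_iff.1 hz).le.trans hρ1.le)⟩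

end NearDiagonal

/-! ### Linear changes of coordinates -/

section LinearCoordinates

variable {E E' : Type*} [NormedAddCommGroup E] [NormedSpace ℂ E] [NormedAddCommGroup E']
  [NormedSpace ℂ E']

theorem BiholomorphicToUniv.preimage {Ω : Set E'} (hΩ : BiholomorphicToUniv Ω)
    (D : E ≃L[ℂ] E') : BiholomorphicToUniv (D ⁻¹' Ω) := by
  obtain ⟨Ψ, Φ, hΨ, hΦ, hmem, hleft, hright⟩ := hΩ
  refine ⟨fun x => D.symm (Ψ (D x)), fun x => D.symm (Φ (D x)),
    D.symm.differentiable.comp_differentiableOn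
      (hΨ.comp D.differentiable.differentiableOn (Set.mapsTo_preimage _ _)),
    D.symm.differentiable.comp (hΦ.comp D.differentiable), fun w => ?_, fun z hz => ?_,
    fun w => ?_⟩
  · rw [Set.mem_preimage, D.apply_symm_apply]
    exact hmem _
  · simp only [D.apply_symm_apply, hleft _ hz, D.symm_apply_apply]
  · simp only [D.apply_symm_apply, hright, D.symm_apply_apply]

theorem preimage_basin_conj (D : E ≃L[ℂ] E') (f : ℕ → HolAut E) (N : Set E') :
    D ⁻¹' basin (fun n => (f n).conj D) N = basin (fun n => f n) (D ⁻¹' N) := by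
  simp only [basin, ← HolAut.coe_comp, Set.preimage_iUnion, ← Set.preimage_comp]
  refine Set.iUnion_congr fun n => congrArg (· ⁻¹' N) (funext fun x => ?_)
  exact HolAut.comp_conj_apply D f (n + 1) x

theorem closure_image_preimage_ball_subset (D : E ≃L[ℂ] E') {f : HolAut E} {ρ κ : ℝ}
    (hf : Set.MapsTo (f.conj D) (ball 0 ρ) (closedBall 0 κ)) :
    closure (f '' (D ⁻¹' ball 0 ρ)) ⊆ D ⁻¹' closedBall 0 κ := by
  refine closure_minimal ?_ (isClosed_closedBall.preimage D.continuous)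
  rintro _ ⟨x, hx, rfl⟩
  rw [Set.mem_preimage, ← HolAut.conj_apply]
  exact hf hx

theorem exists_trapping_of_conj [ProperSpace E'] (D : E ≃L[ℂ] E') {f : ℕ → HolAut E} {ρ κ : ℝ}
    (hρ : 0 < ρ) (hκ : κ < ρ)
    (hmaps : ∀ n, Set.MapsTo ((f n).conj D) (ball 0 ρ) (closedBall 0 κ))
    (hbasin : BiholomorphicToUniv (basin (fun n => (f n).conj D) (ball 0 ρ))) :
    ∃ N : Set E, IsOpen N ∧ 0 ∈ N ∧
      (∀ n, closure (f n '' N) ⊆ N ∧ IsCompact (closure (f n '' N))) ∧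
      BiholomorphicToUniv (basin (fun n => f n) N) := by
  have hcompact : IsCompact (D ⁻¹' closedBall 0 κ) :=
    D.toHomeomorph.isCompact_preimage.2 (isCompact_closedBall 0 κ)
  have hclosure n := closure_image_preimage_ball_subset D (hmaps n)
  refine ⟨D ⁻¹' ball 0 ρ, isOpen_ball.preimage D.continuous, by simpa using hρ, fun n => ?_, ?_⟩
  · exact ⟨(hclosure n).trans (Set.preimage_mono (closedBall_subset_ball hκ)),
      hcompact.of_isClosed_subset isClosed_closure (hclosure n)⟩
  · rw [← preimage_basin_conj]
    exact hbasin.preimage D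

variable {k : ℕ} {F : E → E} {A : E →L[ℂ] E} {lam : Fin k → ℂ} {r η a a' : ℝ}

theorem eventually_norm_sub_mul_le (hF0 : F 0 = 0) (hA : HasFDerivAt F A 0)
    (C : E ≃L[ℂ] (Fin k → ℂ)) (hC : ∀ v, ‖C (A v) - lam * C v‖ ≤ a * ‖C v‖) (ha : a < a') :
    ∀ᶠ v in 𝓝 0, ‖C (F v) - lam * C v‖ ≤ a' * ‖C v‖ := by
  have hlittle : (fun v => C (F v - A v)) =o[𝓝 0] fun v => C v := by
    have := hA.isLittleO
    simp only [hF0, sub_zero] at this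
    exact (C.isBigO_comp _ _).trans_isLittleO (this.trans_isBigO (C.isBigO_comp_rev _ _))
  filter_upwards [hlittle.def (sub_pos.2 ha)] with v hv
  calc ‖C (F v) - lam * C v‖ = ‖C (F v - A v) + (C (A v) - lam * C v)‖ := by
        rw [map_sub, sub_add_sub_cancel]
    _ ≤ (a' - a) * ‖C v‖ + a * ‖C v‖ := (norm_add_le _ _).trans (add_le_add hv (hC v))
    _ = a' * ‖C v‖ := by ring

/-- The linear coordinates `C`, magnified by the factor `t⁻¹`. -/
def zoom (C : E ≃L[ℂ] E') (t : ℂ) (ht : t ≠ 0) : E ≃L[ℂ] E' :=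
  C.trans (ContinuousLinearEquiv.smulLeft (Units.mk0 t⁻¹ (inv_ne_zero ht)))

theorem zoom_apply (C : E ≃L[ℂ] E') {t : ℂ} (ht : t ≠ 0) (x : E) : zoom C t ht x = t⁻¹ • C x :=
  rfl

theorem conj_zoom_sub_mul (C : E ≃L[ℂ] (Fin k → ℂ)) {t : ℂ} (ht : t ≠ 0) (f : HolAut E)
    (lam : Fin k → ℂ) (v : E) : f.conj (zoom C t ht) (zoom C t ht v) - lam * zoom C t ht v =
      t⁻¹ • (C (f v) - lam * C v) := by
  rw [HolAut.conj_apply, zoom_apply, zoom_apply, mul_smul_comm, ← smul_sub]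

theorem exists_pos_forall_norm_lt_of_eventually (C : E ≃L[ℂ] E') {p : E → Prop}
    (hp : ∀ᶠ v in 𝓝 0, p v) : ∃ d > 0, ∀ v, ‖C v‖ < d → p v := by
  have hsymm := C.symm.continuous.tendsto' 0 0 (map_zero _)
  obtain ⟨d, hd, hball⟩ := Metric.eventually_nhds_iff_ball.1 (hsymm.eventually hp)
  exact ⟨d, hd, fun v hv => by simpa using hball (C v) (mem_ball_zero_iff.2 hv)⟩

theorem exists_conj_isNearDiagonal (hF0 : F 0 = 0) (hA : HasFDerivAt F A 0)
    (C : E ≃L[ℂ] (Fin k → ℂ)) (hC : ∀ v, ‖C (A v) - lam * C v‖ ≤ a * ‖C v‖) (ha : 0 ≤ a)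
    (hr : 0 < r) (hη : a * r < η) :
    ∃ ε > 0, ∃ D : E ≃L[ℂ] (Fin k → ℂ), ∀ f : HolAut E, (∀ z ∈ ball 0 1, ‖F z - f z‖ < ε) →
      IsNearDiagonal lam r η (f.conj D) := by
  obtain ⟨a', haa', ha'η⟩ := exists_between ((lt_div_iff₀ hr).2 hη)
  rw [lt_div_iff₀ hr] at ha'η
  obtain ⟨d, hd, hnear⟩ := exists_pos_forall_norm_lt_of_eventually C
    ((eventually_norm_sub_mul_le hF0 hA C hC haa').and (ball_mem_nhds 0 one_pos))
  obtain ⟨t, ht, htd⟩ : ∃ t > 0, t * r < d := ⟨d / (2 * r), by positivity, by field_simp; norm_num⟩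
  obtain ⟨ε, hε, -, hεη⟩ := exists_pos_mul_le (t⁻¹ * ‖(C : E →L[ℂ] Fin k → ℂ)‖) one_pos
    (sub_pos.2 ha'η)
  have ht0 : (t : ℂ) ≠ 0 := Complex.ofReal_ne_zero.2 ht.ne'
  have hnorm v : ‖zoom C t ht0 v‖ = t⁻¹ * ‖C v‖ := by
    rw [zoom_apply, norm_smul, norm_inv, Complex.norm_of_nonneg ht.le]
  refine ⟨ε, hε, zoom C t ht0, fun f hf => ⟨(f.conj _).differentiable.differentiableOn, ?_⟩⟩
  intro z hz
  obtain ⟨v, rfl⟩ := (zoom C t ht0).surjective z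
  have hv : ‖C v‖ ≤ t * r := by
    rwa [mem_closedBall_zero_iff, hnorm, inv_mul_le_iff₀ ht] at hz
  obtain ⟨hFv, hv1⟩ := hnear v (hv.trans_lt htd)
  have hfv : ‖C (f v - F v)‖ ≤ ‖(C : E →L[ℂ] Fin k → ℂ)‖ * ε :=
    (C : E →L[ℂ] Fin k → ℂ).le_opNorm_of_le (by rw [norm_sub_rev]; exact (hf v hv1).le)
  have hsplit : C (f v) - lam * C v = C (f v - F v) + (C (F v) - lam * C v) := by
    rw [map_sub, sub_add_sub_cancel]
  rw [conj_zoom_sub_mul, norm_smul, norm_inv, Complex.norm_of_nonneg ht.le, hsplit]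
  calc t⁻¹ * ‖C (f v - F v) + (C (F v) - lam * C v)‖
    _ ≤ t⁻¹ * (‖(C : E →L[ℂ] Fin k → ℂ)‖ * ε + a' * (t * r)) := by
        have ha' : 0 ≤ a' := ha.trans haa'.le
        gcongr
        exact (norm_add_le _ _).trans (add_le_add hfv (hFv.trans (by gcongr)))
    _ = t⁻¹ * ‖(C : E →L[ℂ] Fin k → ℂ)‖ * ε + a' * r := by field_simp
    _ ≤ η := by linarith

end LinearCoordinates

theorem IsAutomorphism.injective_fderiv {k : ℕ} {F : Ck k → Ck k} (hF : IsAutomorphism F)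
    (x : Ck k) : Function.Injective (fderiv ℂ F x) := by
  obtain ⟨hdiff, Finv, hdiff_inv, hleft, -⟩ := hF
  have hcomp := ((hdiff_inv (F x)).hasFDerivAt.comp x (hdiff x).hasFDerivAt).congr_of_eventuallyEq
    (.of_forall fun z => (hleft z).symm)
  have hid := hcomp.unique (hasFDerivAt_id x)
  exact Function.LeftInverse.injective (g := fderiv ℂ Finv (F x)) fun v => DFunLike.congr_fun hid v

theorem main_theorem_general {E : Type*} [NormedAddCommGroup E] [NormedSpace ℂ E]
    [FiniteDimensional ℂ E] {F : E → E} {A : E →L[ℂ] E} (hF0 : F 0 = 0)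
    (hA : HasFDerivAt F A 0) (hAinj : Function.Injective A)
    (hattr : ∀ μ : ℂ, Module.End.HasEigenvalue A.toLinearMap μ → ‖μ‖ < 1) :
    ∃ ε > 0, ∀ f : ℕ → HolAut E, (∀ n, ∀ z ∈ ball 0 1, ‖F z - f n z‖ < ε) →
      ∃ N : Set E, IsOpen N ∧ 0 ∈ N ∧
        (∀ n, closure (f n '' N) ⊆ N ∧ IsCompact (closure (f n '' N))) ∧
        BiholomorphicToUniv (basin (fun n => f n) N) := by
  obtain ⟨lam, hlam, hbasis⟩ :=
    exists_eigenvalues_forall_exists_almost_diagonal_basis A.toLinearMap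
  have h0 j : lam j ≠ 0 := fun hj => by
    obtain ⟨v, hv⟩ := (hlam j).exists_hasEigenvector
    refine hv.2 (hAinj ?_)
    rw [map_zero, ← zero_smul ℂ v, ← hj]
    exact hv.apply_eq_smul
  have h1 : ‖lam‖ < 1 := (pi_norm_lt_iff zero_lt_one).2 fun j => hattr _ (hlam j)
  obtain ⟨r, hr, η, hη, ρ, hρ, κ, hκ, hbasin⟩ :=
    exists_isNearDiagonal_imp_biholomorphicToUniv_basin h0 h1
  obtain ⟨b, hb⟩ := hbasis (η / (2 * r)) (by positivity)
  obtain ⟨ε, hε, D, hD⟩ := exists_conj_isNearDiagonal hF0 hA b.equivFun.toContinuousLinearEquiv hb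
    (by positivity) hr (η := η) (by field_simp; linarith)
  refine ⟨ε, hε, fun f hf => ?_⟩
  obtain ⟨hmaps, hbiholo⟩ := hbasin (fun n => (f n).conj D) fun n => hD (f n) (hf n)
  exact exists_trapping_of_conj D hρ hκ hmaps hbiholo

/-- **Main Theorem.** Let `F` be an automorphism of `ℂ^k` with an attracting fixed point at `0`
(i.e. all eigenvalues of `F'(0)` have absolute value `< 1`). Then there exists `ε > 0` such that
for every sequence `f_0, f_1, …` of automorphisms with `‖F z - f_n z‖ < ε` on the unit ball,
there is an open neighborhood `N` of `0` with `closure (f_n '' N)` a compact subset of `N` for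
every `n`, and the basin of attraction `⋃_{n ≥ 1} f(n)⁻¹(N)` is biholomorphic to `ℂ^k`. -/
theorem main_theorem (k : ℕ) (hk : 1 ≤ k) (F : Ck k → Ck k)
    (hF : IsAutomorphism F) (hF0 : F 0 = 0)
    (hattr : ∀ μ : ℂ, Module.End.HasEigenvalue ((fderiv ℂ F 0).toLinearMap) μ → ‖μ‖ < 1) :
    ∃ ε : ℝ, 0 < ε ∧ ∀ f : ℕ → Ck k → Ck k, (∀ n, IsAutomorphism (f n)) →
      (∀ n, ∀ z ∈ ball (0 : Ck k) 1, ‖F z - f n z‖ < ε) →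
      ∃ N : Set (Ck k), IsOpen N ∧ (0 : Ck k) ∈ N ∧
        (∀ n, closure (f n '' N) ⊆ N ∧ IsCompact (closure (f n '' N))) ∧
        BiholoToC (⋃ n : ℕ, seqComp f (n + 1) ⁻¹' N) := by
  obtain ⟨ε, hε, h⟩ := main_theorem_general hF0 (hF.1 0).hasFDerivAt (hF.injective_fderiv 0) hattr
  refine ⟨ε, hε, fun f hf hclose => ?_⟩
  choose g hg using fun n => (hf n).exists_holAut_eq
  obtain rfl : (fun n => ⇑(g n)) = f := funext hg
  exact h g hclose
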